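/- Let p > 0 and K ⊂ ℝⁿ a convex body with 0 ∈ int K, and φ : ℝⁿ → ℝⁿ linear with determinant ±1. Then Ω_p(φK) = Ω_p(K), where Ω_p is the L_p affine surface area defined as the infimum over measurable positive g with ∫_{∂K} g^p (h_K∘ν_K)^{1-p} dH^{n-1} < ∞ of (∫_{∂K} g^{-n} H_K dH^{n-1})^{p/(n+p)} (∫_{∂K} g^p (h_K∘ν_K)^{1-p} dH^{n-1})^{n/(n+p)}. -/

import Mathlib

open MeasureTheory Metric Set Filter
open scoped RealInnerProductSpace ENNReal NNReal Topology

noncomputable section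

abbrev Euc (n : ℕ) := EuclideanSpace ℝ (Fin n)

def IsConvexBody {n : ℕ} (K : Set (Euc n)) : Prop :=
  IsCompact K ∧ Convex ℝ K ∧ (interior K).Nonempty

def IsOuterNormalAt {n : ℕ} (K : Set (Euc n)) (u x : Euc n) : Prop :=
  x ∈ frontier K ∧ ∀ y ∈ K, ⟪y, u⟫ ≤ ⟪x, u⟫

open Classical in
/-- The Gauss map: at a regular boundary point, the unique outer unit normal. -/
def gaussMap {n : ℕ} (K : Set (Euc n)) (x : Euc n) : Euc n :=
  if h : ∃ u, ‖u‖ = 1 ∧ IsOuterNormalAt K u x then h.choose else 0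

open Classical in
/-- The inverse Gauss map: at a regular normal vector, the unique boundary point
with that outer normal. -/
def gaussMapInv {n : ℕ} (K : Set (Euc n)) (u : Euc n) : Euc n :=
  if h : ∃ x, IsOuterNormalAt K u x then h.choose else 0

/-- The (n-1)-th curvature measure: (n-1)-dimensional Hausdorff measure on the boundary. -/
def bdryMeasure (n : ℕ) (K : Set (Euc n)) : Measure (Euc n) :=
  (Measure.hausdorffMeasure ((n : ℝ) - 1)).restrict (frontier K)

/-- The 0-th curvature measure: C₀(K,β) = H^{n-1}(ν(K,β)), realized as the pushforward of
the spherical Hausdorff measure under the inverse Gauss map. -/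
def curv0 (n : ℕ) (K : Set (Euc n)) : Measure (Euc n) :=
  Measure.map (gaussMapInv K)
    ((Measure.hausdorffMeasure ((n : ℝ) - 1)).restrict (Metric.sphere (0 : Euc n) 1))

/-- The generalized Gauss curvature H_K, as density of C₀(K,·) w.r.t. C_{n-1}(K,·). -/
def gaussCurv (n : ℕ) (K : Set (Euc n)) : Euc n → ℝ≥0∞ :=
  Measure.rnDeriv (curv0 n K) (bdryMeasure n K)

/-- The surface area measure S_K, pushforward of boundary Hausdorff measure by the Gauss map. -/
def surfaceMeasure (n : ℕ) (K : Set (Euc n)) : Measure (Euc n) :=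
  Measure.map (gaussMap K) (bdryMeasure n K)

/-- The generalized curvature function F_K, as density of S_K w.r.t. spherical Hausdorff measure. -/
def curvFn (n : ℕ) (K : Set (Euc n)) : Euc n → ℝ≥0∞ :=
  Measure.rnDeriv (surfaceMeasure n K)
    ((Measure.hausdorffMeasure ((n : ℝ) - 1)).restrict (Metric.sphere (0 : Euc n) 1))

/-- The support function of K. -/
def suppFn {n : ℕ} (K : Set (Euc n)) (x : Euc n) : ℝ :=
  sSup ((fun y => ⟪y, x⟫) '' K)


/-- L_p affine surface area in the form with measurable g: the infimum over measurable
positive g with finite second integral of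
(∫ g^{-n} H_K dH^{n-1})^{p/(n+p)} (∫ g^p (h_K∘ν_K)^{1-p} dH^{n-1})^{n/(n+p)}. -/
def lpASAm (n : ℕ) (p : ℝ) (K : Set (Euc n)) : ℝ≥0∞ :=
  sInf {v : ℝ≥0∞ | ∃ g : Euc n → ℝ≥0∞, Measurable g ∧ (∀ x, 0 < g x ∧ g x < ⊤) ∧
    (∫⁻ x, g x ^ p * ENNReal.ofReal (suppFn K (gaussMap K x)) ^ (1 - p)
      ∂(bdryMeasure n K)) < ⊤ ∧
    v = (∫⁻ x, g x ^ (-(n : ℝ)) * gaussCurv n K x ∂(bdryMeasure n K)) ^ (p / (n + p)) *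
        (∫⁻ x, g x ^ p * ENNReal.ofReal (suppFn K (gaussMap K x)) ^ (1 - p)
          ∂(bdryMeasure n K)) ^ ((n : ℝ) / (n + p))}

/-- Positive sublinear functions (gauge functions of convex bodies around the origin). -/
structure GaugeLike {n : ℕ} (g : Euc n → ℝ) : Prop where
  add : ∀ x y, g (x + y) ≤ g x + g y
  smul : ∀ (t : ℝ) x, 0 ≤ t → g (t • x) = t * g x
  lower : ∃ r : ℝ, 0 < r ∧ ∀ x, r * ‖x‖ ≤ g x
  upper : ∃ C : ℝ, 0 < C ∧ ∀ x, g x ≤ C * ‖x‖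

namespace GaugeLike
variable {n : ℕ} {g : Euc n → ℝ}

theorem zero (hg : GaugeLike g) : g 0 = 0 := by
  have := hg.smul 0 0 le_rfl
  simpa using this

theorem pos (hg : GaugeLike g) {x : Euc n} (hx : x ≠ 0) : 0 < g x := by
  obtain ⟨r, hr, h⟩ := hg.lower
  have := norm_pos_iff.2 hx
  have := h x
  nlinarith [mul_pos hr (norm_pos_iff.2 hx)]

theorem nonneg (hg : GaugeLike g) (x : Euc n) : 0 ≤ g x := by
  by_cases hx : x = 0
  · rw [hx, hg.zero]
  · exact (hg.pos hx).le

theorem sub_le (hg : GaugeLike g) (x y : Euc n) : g x - g y ≤ g (x - y) := by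
  have := hg.add (x - y) y
  simp at this
  linarith

theorem lip (hg : GaugeLike g) : ∃ C : ℝ, 0 < C ∧ (∀ x, g x ≤ C * ‖x‖) ∧
    ∀ x y, |g x - g y| ≤ C * ‖x - y‖ := by
  obtain ⟨C, hC, h⟩ := hg.upper
  refine ⟨C, hC, h, fun x y => ?_⟩
  rw [abs_le]
  have h1 := hg.sub_le x y
  have h2 := hg.sub_le y x
  have h3 := h (x - y)
  have h4 := h (y - x)
  rw [norm_sub_rev] at h4
  constructor <;> linarith

theorem lipschitz (hg : GaugeLike g) : ∃ C : ℝ≥0, LipschitzWith C g := by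
  obtain ⟨C, hC, -, h⟩ := hg.lip
  refine ⟨⟨C, hC.le⟩, LipschitzWith.of_dist_le_mul fun x y => ?_⟩
  rw [Real.dist_eq, dist_eq_norm]
  exact h x y

theorem cont (hg : GaugeLike g) : Continuous g := by
  obtain ⟨C, h⟩ := hg.lipschitz
  exact h.continuous

theorem ae_diff (hg : GaugeLike g) : ∀ᵐ x, DifferentiableAt ℝ g x := by
  obtain ⟨C, h⟩ := hg.lipschitz
  exact h.ae_differentiableAt

theorem hasFDerivAt_smul (hg : GaugeLike g) {t : ℝ} (ht : 0 < t) {x : Euc n}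
    (hx : DifferentiableAt ℝ g x) : HasFDerivAt g (fderiv ℝ g x) (t • x) := by
  have h1 : g = fun y => t * g (t⁻¹ • y) := by
    ext y
    rw [hg.smul _ _ (by positivity)]
    field_simp
  have h3 : HasFDerivAt g (fderiv ℝ g x) (t⁻¹ • (t • x)) := by
    rw [inv_smul_smul₀ ht.ne']
    exact hx.hasFDerivAt
  have h4 : HasFDerivAt (fun y : Euc n => t⁻¹ • y) (t⁻¹ • ContinuousLinearMap.id ℝ (Euc n)) (t • x) :=
    (hasFDerivAt_id _).const_smul t⁻¹
  have h5 := (h3.comp _ h4).const_mul t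
  have h6 : t • (fderiv ℝ g x).comp (t⁻¹ • ContinuousLinearMap.id ℝ (Euc n)) = fderiv ℝ g x := by
    apply ContinuousLinearMap.ext
    intro v
    simp
    field_simp
  rw [h6] at h5
  exact h5.congr_of_eventuallyEq (Filter.Eventually.of_forall fun y => congrFun h1 y)

theorem diff_smul_iff (hg : GaugeLike g) {t : ℝ} (ht : 0 < t) {x : Euc n} :
    DifferentiableAt ℝ g (t • x) ↔ DifferentiableAt ℝ g x := by
  refine ⟨fun h => ?_, fun h => (hg.hasFDerivAt_smul ht h).differentiableAt⟩
  have := (hg.hasFDerivAt_smul (inv_pos.2 ht) h).differentiableAt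
  rwa [inv_smul_smul₀ ht.ne'] at this

theorem fderiv_smul (hg : GaugeLike g) {t : ℝ} (ht : 0 < t) (x : Euc n) :
    fderiv ℝ g (t • x) = fderiv ℝ g x := by
  by_cases h : DifferentiableAt ℝ g x
  · exact (hg.hasFDerivAt_smul ht h).fderiv
  · rw [fderiv_zero_of_not_differentiableAt h,
      fderiv_zero_of_not_differentiableAt (mt (hg.diff_smul_iff ht).1 h)]

/-- If `a * g - ℓ` attains its minimum at a differentiability point, then `a ∇g = ℓ`. -/
theorem fderiv_of_min {a : ℝ} {ℓ : Euc n →L[ℝ] ℝ} {x : Euc n} (hx : DifferentiableAt ℝ g x)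
    (h : ∀ z, ℓ z ≤ a * g z) (h' : ℓ x = a * g x) : a • fderiv ℝ g x = ℓ := by
  have h1 : HasFDerivAt (fun z => a * g z - ℓ z) (a • fderiv ℝ g x - ℓ) x :=
    (hx.hasFDerivAt.const_mul a).sub ℓ.hasFDerivAt
  have h2 : IsLocalMin (fun z => a * g z - ℓ z) x := by
    refine Filter.Eventually.of_forall fun z => ?_
    have := h z
    simp only
    linarith
  have := h2.hasFDerivAt_eq_zero h1
  exact sub_eq_zero.1 this

theorem strict (hg : GaugeLike g) {x₀ : Euc n} (hx : DifferentiableAt ℝ g x₀) {ε : ℝ} (hε : 0 < ε) :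
    ∃ r : ℝ, 0 < r ∧ ∀ x ∈ ball x₀ r, ∀ y ∈ ball x₀ r,
      |g x - g y - fderiv ℝ g x₀ (x - y)| ≤ ε * ‖x - y‖ := by
  have h1 := hx.hasFDerivAt.isLittleO.def (show (0 : ℝ) < ε / 3 by positivity)
  obtain ⟨δ, hδ, h⟩ := Metric.eventually_nhds_iff.1 h1
  have key : ∀ x ∈ ball x₀ (δ / 2), ∀ y ∈ ball x₀ (δ / 2),
      g x - g y - fderiv ℝ g x₀ (x - y) ≤ ε * ‖x - y‖ := by
    intro x hx y hy
    by_cases hxy : x = y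
    · simp [hxy]
    have hs : 0 < ‖x - y‖ := norm_pos_iff.2 (sub_ne_zero.2 hxy)
    set l := δ / (2 * ‖x - y‖) with hl
    have hlpos : 0 < l := by positivity
    have hls : l * ‖x - y‖ = δ / 2 := by rw [hl]; field_simp
    set z := x + l • (x - y) with hz
    have hzx : dist z x = δ / 2 := by
      rw [dist_eq_norm, hz, add_sub_cancel_left, norm_smul, Real.norm_of_nonneg hlpos.le, hls]
    rw [mem_ball] at hx hy
    have hz0 : dist z x₀ < δ := by linarith [dist_triangle z x x₀]
    have a1 := h hz0
    have a2 := h (show dist x x₀ < δ by linarith)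
    rw [Real.norm_eq_abs, abs_le, ← dist_eq_norm] at a1 a2
    have c : (1 + l) * g x ≤ g z + l * g y := by
      rw [← hg.smul _ _ (by positivity), ← hg.smul _ y hlpos.le]
      refine le_trans (le_of_eq ?_) (hg.add _ _)
      congr 1
      rw [hz]
      module
    have d : fderiv ℝ g x₀ (z - x₀) - fderiv ℝ g x₀ (x - x₀) = l * fderiv ℝ g x₀ (x - y) := by
      rw [← map_sub, sub_sub_sub_cancel_right, hz, add_sub_cancel_left, map_smul, smul_eq_mul]
    have e : l * (g x - g y - fderiv ℝ g x₀ (x - y)) ≤ l * (ε * ‖x - y‖) := by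
      have : l * (ε * ‖x - y‖) = ε * (δ / 2) := by rw [← hls]; ring
      rw [this]
      have b1 : ε / 3 * dist z x₀ ≤ ε / 3 * δ := by gcongr
      have b2 : ε / 3 * dist x x₀ ≤ ε / 3 * (δ / 2) := by gcongr
      nlinarith [a1.2, a2.1]
    exact le_of_mul_le_mul_left e hlpos
  refine ⟨δ / 2, by positivity, fun x hx y hy => abs_le.2 ⟨?_, key x hx y hy⟩⟩
  have := key y hy x hx
  rw [norm_sub_rev, ← neg_sub x y, map_neg] at this
  linarith

theorem euler (hg : GaugeLike g) {x : Euc n} (hx : DifferentiableAt ℝ g x) : fderiv ℝ g x x = g x := by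
  have h1 : HasDerivAt (fun t : ℝ => g (t • x)) (fderiv ℝ g x x) 1 := by
    have h2 : HasFDerivAt g (fderiv ℝ g x) ((1 : ℝ) • x) := by
      rw [one_smul]; exact hx.hasFDerivAt
    have h3 : HasDerivAt (fun t : ℝ => t • x) ((1 : ℝ) • x) 1 := (hasDerivAt_id (1 : ℝ)).smul_const x
    have := h2.comp_hasDerivAt (1 : ℝ) h3
    rw [one_smul] at this
    exact this
  have h4 : HasDerivAt (fun t : ℝ => g (t • x)) (g x) 1 := by
    have : HasDerivAt (fun t : ℝ => t * g x) (1 * g x) 1 := (hasDerivAt_id (1 : ℝ)).mul_const _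
    rw [one_mul] at this
    refine this.congr_of_eventuallyEq ?_
    filter_upwards [lt_mem_nhds (show (0 : ℝ) < 1 by norm_num)] with t ht
    exact hg.smul t x ht.le
  exact h1.unique h4

theorem fderiv_le (hg : GaugeLike g) {x : Euc n} (hx : DifferentiableAt ℝ g x) (y : Euc n) :
    fderiv ℝ g x y ≤ g y := by
  refine le_of_forall_pos_le_add fun ε hε => ?_
  obtain ⟨r, hr, h⟩ := hg.strict hx (show 0 < ε / (‖y‖ + 1) by positivity)
  set t := r / (2 * (‖y‖ + 1)) with ht
  have htpos : 0 < t := by positivity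
  have hty : t * ‖y‖ < r := by
    rw [ht, div_mul_eq_mul_div, div_lt_iff₀ (by positivity)]
    nlinarith [norm_nonneg y]
  have h1 := h (x + t • y) (by simpa [dist_eq_norm, norm_smul, abs_of_pos htpos] using hty) x
    (mem_ball_self hr)
  rw [add_sub_cancel_left, map_smul, abs_le, norm_smul, Real.norm_of_nonneg htpos.le,
    smul_eq_mul] at h1
  have h2 := hg.add x (t • y)
  rw [hg.smul _ _ htpos.le] at h2
  have h3 : t * fderiv ℝ g x y ≤ t * (g y + ε) := by
    have : ε / (‖y‖ + 1) * (t * ‖y‖) ≤ t * ε := by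
      rw [div_mul_eq_mul_div, div_le_iff₀ (by positivity)]
      nlinarith [mul_pos hε htpos, norm_nonneg y]
    nlinarith [h1.1]
  exact le_of_mul_le_mul_left h3 htpos

end GaugeLike

def shl {n : ℕ} (g : Euc n → ℝ) : Set (Euc n) := {x | 1 / 2 ≤ g x ∧ g x < 1}

def rad {n : ℕ} (g : Euc n → ℝ) (x : Euc n) : Euc n := (g x)⁻¹ • x

/-- Cone measure on `{g = 1}` (up to a dimensional constant). -/
def coneM {n : ℕ} (g : Euc n → ℝ) : Measure (Euc n) :=
  Measure.map (rad g) ((volume : Measure (Euc n)).restrict (shl g))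

open Classical in
def HH {n : ℕ} (g : Euc n → ℝ) (x : Euc n) : ℝ≥0∞ :=
  if fderiv ℝ g x = 0 then 1 else ENNReal.ofReal ‖fderiv ℝ g x‖⁻¹

theorem measurable_HH {n : ℕ} (g : Euc n → ℝ) : Measurable (HH g) := by
  unfold HH
  have h := measurable_fderiv ℝ g
  refine Measurable.ite (h (measurableSet_singleton _)) measurable_const ?_
  exact ENNReal.measurable_ofReal.comp h.norm.inv

theorem HH_pos {n : ℕ} (g : Euc n → ℝ) (x : Euc n) : 0 < HH g x := by
  unfold HH
  split_ifs with h
  · simp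
  · rw [ENNReal.ofReal_pos]
    have := norm_pos_iff.2 h
    positivity

theorem HH_lt_top {n : ℕ} (g : Euc n → ℝ) (x : Euc n) : HH g x < ⊤ := by
  unfold HH
  split_ifs with h <;> simp

namespace GaugeLike
variable {n : ℕ} {g : Euc n → ℝ}

theorem measurable_rad (hg : GaugeLike g) : Measurable (rad g) := by
  have := hg.cont.measurable
  unfold rad
  exact this.inv.smul measurable_id

theorem measurableSet_shl (hg : GaugeLike g) : MeasurableSet (shl g) := by
  have := hg.cont.measurable
  exact (measurableSet_le measurable_const this).inter (measurableSet_lt this measurable_const)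

theorem coneM_apply (hg : GaugeLike g) {A : Set (Euc n)} (hA : MeasurableSet A) :
    coneM g A = volume (rad g ⁻¹' A ∩ shl g) := by
  rw [coneM, Measure.map_apply hg.measurable_rad hA, Measure.restrict_apply (hg.measurable_rad hA)]

theorem volume_shl_lt_top (hg : GaugeLike g) : volume (shl g) < ⊤ := by
  obtain ⟨r, hr, h⟩ := hg.lower
  refine lt_of_le_of_lt (measure_mono (t := closedBall 0 (1 / r)) ?_) measure_closedBall_lt_top
  intro x hx
  rw [mem_closedBall_zero_iff, le_div_iff₀ hr]
  linarith [h x, hx.2]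

theorem isFinite_coneM (hg : GaugeLike g) : IsFiniteMeasure (coneM g) := by
  have : IsFiniteMeasure ((volume : Measure (Euc n)).restrict (shl g)) :=
    ⟨by simpa using hg.volume_shl_lt_top⟩
  unfold coneM
  infer_instance

theorem coneM_nondiff (hg : GaugeLike g) {f : Euc n → ℝ} (hf : GaugeLike f) :
    coneM g {x | ¬ DifferentiableAt ℝ f x} = 0 := by
  have hm : MeasurableSet {x | ¬ DifferentiableAt ℝ f x} :=
    (measurableSet_of_differentiableAt ℝ f).compl
  rw [hg.coneM_apply hm]
  refine measure_mono_null (t := {x | ¬ DifferentiableAt ℝ f x}) ?_ hf.ae_diff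
  rintro x ⟨hx1, hx2⟩
  have hx : 0 < g x := lt_of_lt_of_le (by norm_num) hx2.1
  simp only [rad, mem_preimage, mem_ofPred_eq, hf.diff_smul_iff (inv_pos.2 hx)] at hx1
  exact hx1

end GaugeLike

theorem exists_vol_eq (n : ℕ) : ∃ c : ℝ≥0∞, c ≠ 0 ∧ c ≠ ⊤ ∧
    (volume : Measure (Euc n)) = c • Measure.hausdorffMeasure (n : ℝ) := by
  have h : Measure.IsAddHaarMeasure (Measure.hausdorffMeasure (n : ℝ) : Measure (Euc n)) := by
    have := MeasureTheory.isAddHaarMeasure_hausdorffMeasure (E := Euc n)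
    simpa using this
  refine ⟨_, ?_, ?_, Measure.isAddLeftInvariant_eq_smul (volume : Measure (Euc n)) _⟩
  · simpa using (Measure.addHaarScalarFactor_pos_of_isAddHaarMeasure _ _).ne'
  · simp

theorem vol_lip {n : ℕ} {f : Euc n → Euc n} {L : ℝ≥0} {s : Set (Euc n)}
    (h : ∀ x ∈ s, ∀ y ∈ s, ‖f x - f y‖ ≤ L * ‖x - y‖) :
    volume (f '' s) ≤ (L : ℝ≥0∞) ^ n * volume s := by
  obtain ⟨c, h0, h1, hc⟩ := exists_vol_eq n
  have hl : LipschitzOnWith L f s := LipschitzOnWith.of_dist_le_mul fun x hx y hy => by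
    simpa [dist_eq_norm] using h x hx y hy
  have := hl.hausdorffMeasure_image_le (Nat.cast_nonneg (α := ℝ) n)
  rw [hc, Measure.smul_apply, Measure.smul_apply, smul_eq_mul, smul_eq_mul, mul_left_comm]
  rw [ENNReal.rpow_natCast] at this
  gcongr

theorem vol_antilip {n : ℕ} {f : Euc n → Euc n} {L : ℝ≥0} {s : Set (Euc n)}
    (h : ∀ x ∈ s, ∀ y ∈ s, ‖x - y‖ ≤ L * ‖f x - f y‖) :
    volume s ≤ (L : ℝ≥0∞) ^ n * volume (f '' s) := by
  have hinj : InjOn f s := by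
    intro x hx y hy hxy
    have := h x hx y hy
    rw [hxy, sub_self, norm_zero, mul_zero] at this
    exact sub_eq_zero.1 (norm_le_zero_iff.1 this)
  have key : volume (Function.invFunOn f s '' (f '' s)) ≤ (L : ℝ≥0∞) ^ n * volume (f '' s) := by
    refine vol_lip ?_
    rintro _ ⟨x, hx, rfl⟩ _ ⟨y, hy, rfl⟩
    rw [hinj.leftInvOn_invFunOn hx, hinj.leftInvOn_invFunOn hy]
    exact h x hx y hy
  rwa [hinj.leftInvOn_invFunOn.image_image] at key

theorem haus_antilip {n : ℕ} {f : Euc n → Euc n} {L : ℝ≥0} {s : Set (Euc n)} {d : ℕ}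
    (h : ∀ x ∈ s, ∀ y ∈ s, ‖x - y‖ ≤ L * ‖f x - f y‖) :
    Measure.hausdorffMeasure (d : ℝ) s ≤ (L : ℝ≥0∞) ^ d * Measure.hausdorffMeasure (d : ℝ) (f '' s) := by
  have hinj : InjOn f s := by
    intro x hx y hy hxy
    have := h x hx y hy
    rw [hxy, sub_self, norm_zero, mul_zero] at this
    exact sub_eq_zero.1 (norm_le_zero_iff.1 this)
  have hl : LipschitzOnWith L (Function.invFunOn f s) (f '' s) := by
    refine LipschitzOnWith.of_dist_le_mul ?_
    rintro _ ⟨x, hx, rfl⟩ _ ⟨y, hy, rfl⟩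
    rw [hinj.leftInvOn_invFunOn hx, hinj.leftInvOn_invFunOn hy, dist_eq_norm, dist_eq_norm]
    exact h x hx y hy
  have key := hl.hausdorffMeasure_image_le (Nat.cast_nonneg (α := ℝ) d)
  rwa [hinj.leftInvOn_invFunOn.image_image, ENNReal.rpow_natCast] at key

/-! flat cones -/

def volC (m : ℕ) : ℝ≥0∞ := (exists_vol_eq m).choose

def kap (m : ℕ) : ℝ≥0∞ := ENNReal.ofReal ((1 - (1 / 2) ^ (m + 1)) / (m + 1))

def cm (m : ℕ) : ℝ≥0∞ := kap m * volC m

theorem cm_ne_zero (m : ℕ) : cm m ≠ 0 := by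
  refine mul_ne_zero ?_ (exists_vol_eq m).choose_spec.1
  unfold kap
  rw [ne_eq, ENNReal.ofReal_eq_zero, not_le]
  have : ((1 : ℝ) / 2) ^ (m + 1) < 1 := pow_lt_one₀ (by norm_num) (by norm_num) (by simp)
  have : 0 < 1 - ((1 : ℝ) / 2) ^ (m + 1) := by linarith
  positivity

theorem cm_ne_top (m : ℕ) : cm m ≠ ⊤ :=
  ENNReal.mul_ne_top ENNReal.ofReal_ne_top (exists_vol_eq m).choose_spec.2.1

theorem flat_integral (m : ℕ) {h : ℝ} (hh : 0 < h) :
    ∫⁻ τ in Ico (h / 2) h, ENNReal.ofReal ((τ / h) ^ m) = ENNReal.ofReal h * kap m := by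
  rw [Measure.restrict_congr_set Ico_ae_eq_Ioc,
    ← ofReal_integral_eq_lintegral_ofReal, ← intervalIntegral.integral_of_le (by linarith)]
  · rw [intervalIntegral.integral_comp_div (fun x => x ^ m) hh.ne', integral_pow, kap,
      ← ENNReal.ofReal_mul hh.le, smul_eq_mul]
    congr 2
    rw [div_self hh.ne']
    have : h / 2 / h = 1 / 2 := by field_simp
    rw [this]
    simp
  · have : Continuous fun x : ℝ => (x / h) ^ m := by fun_prop
    exact (this.intervalIntegrable (h / 2) h).1
  · filter_upwards [ae_restrict_mem measurableSet_Ioc] with y hy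
    have : 0 < y := by linarith [hy.1]
    simp only [Pi.zero_apply]
    positivity

theorem flat_prod (m : ℕ) {h : ℝ} (hh : 0 < h) {B : Set (Euc m)} (hB : MeasurableSet B) :
    (volume : Measure (Euc m × ℝ)) {q | (h / 2 ≤ q.2 ∧ q.2 < h) ∧ (h / q.2) • q.1 ∈ B} =
      cm m * ENNReal.ofReal h * Measure.hausdorffMeasure (m : ℝ) B := by
  have hms : MeasurableSet {q : Euc m × ℝ | (h / 2 ≤ q.2 ∧ q.2 < h) ∧ (h / q.2) • q.1 ∈ B} := by
    refine MeasurableSet.inter (MeasurableSet.inter ?_ ?_) ?_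
    · exact measurableSet_le measurable_const measurable_snd
    · exact measurableSet_lt measurable_snd measurable_const
    · have : Measurable fun q : Euc m × ℝ => (h / q.2) • q.1 :=
        (measurable_const.div measurable_snd).smul measurable_fst
      exact this hB
  rw [Measure.volume_eq_prod, Measure.prod_apply_symm hms]
  have e : ∀ τ : ℝ, volume ((fun z : Euc m => (z, τ)) ⁻¹'
      {q : Euc m × ℝ | (h / 2 ≤ q.2 ∧ q.2 < h) ∧ (h / q.2) • q.1 ∈ B}) =
      (Ico (h / 2) h).indicator (fun τ => ENNReal.ofReal ((τ / h) ^ m) * volume B) τ := by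
    intro τ
    by_cases hτ : τ ∈ Ico (h / 2) h
    · rw [indicator_of_mem hτ]
      have hp : 0 < τ := by linarith [hτ.1]
      have : ((fun z : Euc m => (z, τ)) ⁻¹'
        {q : Euc m × ℝ | (h / 2 ≤ q.2 ∧ q.2 < h) ∧ (h / q.2) • q.1 ∈ B}) =
          (fun z : Euc m => (h / τ) • z) ⁻¹' B := by
        ext z
        simp only [mem_preimage, mem_ofPred_eq]
        exact ⟨fun h => h.2, fun h => ⟨hτ, h⟩⟩
      rw [this, Measure.addHaar_preimage_smul _ (by positivity)]
      congr 2
      rw [abs_of_pos (by positivity), finrank_euclideanSpace, Fintype.card_fin, ← inv_pow, inv_div]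
    · rw [indicator_of_notMem hτ]
      refine measure_mono_null (t := ∅) ?_ measure_empty
      intro z hz
      exact hτ hz.1
  simp_rw [e]
  rw [lintegral_indicator measurableSet_Ico, lintegral_mul_const, flat_integral m hh, cm]
  · conv_lhs => rw [(exists_vol_eq m).choose_spec.2.2]
    rw [Measure.smul_apply, smul_eq_mul, volC]
    ring
  · fun_prop

def Qm {n : ℕ} (u x : Euc n) : Euc n := x - ⟪x, u⟫ • u

def Gm {n : ℕ} (g : Euc n → ℝ) (u : Euc n) (h : ℝ) (x : Euc n) : Euc n :=
  x + (h * g x - ⟪x, u⟫) • u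

theorem exists_theta (m : ℕ) (u : Euc (m + 1)) (hu : ‖u‖ = 1) :
    ∃ Θ : WithLp 2 (Euc m × ℝ) ≃ₗᵢ[ℝ] Euc (m + 1), Θ (WithLp.toLp 2 (0, 1)) = u := by
  have hd : Module.finrank ℝ (WithLp 2 (Euc m × ℝ)) = m + 1 := by
    rw [(WithLp.linearEquiv 2 ℝ (Euc m × ℝ)).finrank_eq]
    simp
  let Θ₀ : WithLp 2 (Euc m × ℝ) ≃ₗᵢ[ℝ] Euc (m + 1) :=
    (stdOrthonormalBasis ℝ (WithLp 2 (Euc m × ℝ))).repr.trans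
      (LinearIsometryEquiv.piLpCongrLeft 2 ℝ ℝ (finCongr hd))
  have hn : ‖Θ₀ (WithLp.toLp 2 (0, 1))‖ = ‖u‖ := by
    rw [Θ₀.norm_map, hu]
    simp [WithLp.prod_norm_eq_of_L2]
  refine ⟨Θ₀.trans (Submodule.reflection (ℝ ∙ (Θ₀ (WithLp.toLp 2 (0, 1)) - u))ᗮ), ?_⟩
  simp only [LinearIsometryEquiv.trans_apply]
  exact Submodule.reflection_sub hn

theorem flat_vol (m : ℕ) {u : Euc (m + 1)} (hu : ‖u‖ = 1) {h : ℝ} (hh : 0 < h)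
    {B : Set (Euc (m + 1))} (hB : MeasurableSet B) (hBu : ∀ x ∈ B, ⟪x, u⟫ = 0) :
    volume {x : Euc (m + 1) | (h / 2 ≤ ⟪x, u⟫ ∧ ⟪x, u⟫ < h) ∧ (h / ⟪x, u⟫) • Qm u x ∈ B} =
      cm m * ENNReal.ofReal h * Measure.hausdorffMeasure (m : ℝ) B := by
  obtain ⟨Θ, hΘ⟩ := exists_theta m u hu
  let f : Euc m → Euc (m + 1) := fun z => Θ (WithLp.toLp 2 (z, 0))
  have hf : Isometry f := by
    refine Θ.isometry.comp (Isometry.of_dist_eq fun x y => ?_)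
    rw [dist_eq_norm, dist_eq_norm, ← WithLp.toLp_sub, WithLp.prod_norm_eq_of_L2]
    simp
  have hin : ∀ q : Euc m × ℝ, ⟪Θ (WithLp.toLp 2 q), u⟫ = q.2 := by
    intro q
    rw [← hΘ, Θ.inner_map_map, WithLp.prod_inner_apply]
    simp
  have hdec : ∀ q : Euc m × ℝ, Qm u (Θ (WithLp.toLp 2 q)) = f q.1 := by
    intro q
    rw [Qm, hin, ← hΘ, ← map_smul, ← map_sub]
    simp only [f]
    congr 1
    rw [← WithLp.toLp_smul, ← WithLp.toLp_sub]
    congr 1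
    ext <;> simp
  have hr : B ⊆ range f := by
    intro x hx
    refine ⟨(WithLp.ofLp (Θ.symm x)).1, ?_⟩
    have := hdec (WithLp.ofLp (Θ.symm x))
    simp only [WithLp.toLp_ofLp, LinearIsometryEquiv.apply_symm_apply] at this
    rw [Qm, hBu x hx, zero_smul, sub_zero] at this
    exact this.symm
  have hH := hf.hausdorffMeasure_preimage (d := (m : ℝ)) (Or.inl (Nat.cast_nonneg m)) B
  rw [inter_eq_left.2 hr] at hH
  have hmp : MeasurePreserving (fun q : Euc m × ℝ => Θ (WithLp.toLp 2 q)) :=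
    Θ.measurePreserving.comp (WithLp.volume_preserving_toLp (Euc m) ℝ)
  have hme : MeasurableEmbedding (fun q : Euc m × ℝ => Θ (WithLp.toLp 2 q)) :=
    Θ.toHomeomorph.measurableEmbedding.comp (MeasurableEquiv.toLp 2 (Euc m × ℝ)).measurableEmbedding
  rw [← hH, ← flat_prod m hh (hf.continuous.measurable hB),
    ← hmp.measure_preimage_emb hme]
  congr 1
  ext q
  simp only [mem_preimage, mem_ofPred_eq, hin, hdec]
  refine and_congr_right fun _ => ?_
  have : (h / q.2) • f q.1 = f ((h / q.2) • q.1) := by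
    simp only [f, ← map_smul, ← WithLp.toLp_smul]
    congr 2
    ext <;> simp
  rw [this]

theorem Gm_eq {n : ℕ} (g : Euc n → ℝ) (u : Euc n) (h : ℝ) (x : Euc n) :
    Gm g u h x = Qm u x + (h * g x) • u := by
  rw [Gm, Qm]; module

theorem Qm_sub {n : ℕ} (u x y : Euc n) : Qm u x - Qm u y = Qm u (x - y) := by
  simp only [Qm, inner_sub_left]; module

theorem Qm_smul {n : ℕ} (u x : Euc n) (t : ℝ) : Qm u (t • x) = t • Qm u x := by
  simp only [Qm, inner_smul_left, RCLike.conj_to_real]; module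

theorem inner_Qm {n : ℕ} {u : Euc n} (hu : ‖u‖ = 1) (x : Euc n) : ⟪Qm u x, u⟫ = 0 := by
  rw [Qm, inner_sub_left, inner_smul_left, real_inner_self_eq_norm_sq, hu]
  simp

theorem norm_Qm_le {n : ℕ} {u : Euc n} (hu : ‖u‖ = 1) (x : Euc n) : ‖Qm u x‖ ≤ ‖x‖ := by
  have h1 : x = Qm u x + ⟪x, u⟫ • u := by rw [Qm]; module
  have h2 : ‖x‖ * ‖x‖ = ‖Qm u x‖ * ‖Qm u x‖ + ‖⟪x, u⟫ • u‖ * ‖⟪x, u⟫ • u‖ := by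
    conv_lhs => rw [h1]
    apply norm_add_sq_eq_norm_sq_add_norm_sq_real
    rw [inner_smul_right, inner_Qm hu, mul_zero]
  nlinarith [norm_nonneg x, norm_nonneg (Qm u x), mul_self_nonneg ‖⟪x, u⟫ • u‖]

theorem Gm_image {n : ℕ} {g : Euc n → ℝ} (hg : GaugeLike g) {u : Euc n} (hu : ‖u‖ = 1)
    {h : ℝ} (hh : 0 < h) {A : Set (Euc n)} (hA : ∀ x ∈ A, g x = 1) :
    Gm g u h '' (rad g ⁻¹' A ∩ shl g) =
      {x | (h / 2 ≤ ⟪x, u⟫ ∧ ⟪x, u⟫ < h) ∧ (h / ⟪x, u⟫) • Qm u x ∈ Qm u '' A} := by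
  have hin : ∀ (q : Euc n) (τ : ℝ), ⟪Qm u q + τ • u, u⟫ = τ := by
    intro q τ
    rw [inner_add_left, inner_Qm hu, inner_smul_left, real_inner_self_eq_norm_sq, hu]
    simp
  have hQQ : ∀ (q : Euc n) (τ : ℝ), Qm u (Qm u q + τ • u) = Qm u q := by
    intro q τ
    rw [Qm, hin]; module
  ext y
  constructor
  · rintro ⟨x, ⟨hx1, hx2⟩, rfl⟩
    have hx : 0 < g x := lt_of_lt_of_le (by norm_num) hx2.1
    simp only [mem_ofPred_eq, Gm_eq, hin, hQQ]
    refine ⟨⟨by nlinarith [hx2.1], by nlinarith [hx2.2]⟩, rad g x, hx1, ?_⟩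
    rw [rad, Qm_smul]
    congr 1
    field_simp
  · rintro ⟨⟨h1, h2⟩, a, ha, hay⟩
    have hτ : 0 < ⟪y, u⟫ := by linarith
    have hgx : g ((⟪y, u⟫ / h) • a) = ⟪y, u⟫ / h := by
      rw [hg.smul _ _ (by positivity), hA a ha, mul_one]
    refine ⟨(⟪y, u⟫ / h) • a, ⟨?_, ?_, ?_⟩, ?_⟩
    · rw [mem_preimage, rad, hgx, inv_smul_smul₀ (by positivity)]
      exact ha
    · rw [hgx, le_div_iff₀ hh]; linarith
    · rw [hgx, div_lt_one hh]; exact h2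
    · rw [Gm_eq, hgx, Qm_smul, hay, smul_smul, mul_div_cancel₀ _ hh.ne']
      have : ⟪y, u⟫ / h * (h / ⟪y, u⟫) = 1 := by field_simp
      rw [this, one_smul, Qm]
      module

section cmp
variable {m : ℕ} {g : Euc (m + 1) → ℝ} {u : Euc (m + 1)} {h : ℝ} {A : Set (Euc (m + 1))} {L : ℝ≥0}

theorem continuous_Qm {n : ℕ} (u : Euc n) : Continuous (Qm u) := by
  unfold Qm; fun_prop

theorem vol_Gm_image (hg : GaugeLike g) (hu : ‖u‖ = 1) (hh : 0 < h) (hAm : MeasurableSet A)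
    (hA : ∀ x ∈ A, g x = 1) (hinj : InjOn (Qm u) A) :
    volume (Gm g u h '' (rad g ⁻¹' A ∩ shl g)) =
      cm m * ENNReal.ofReal h * Measure.hausdorffMeasure (m : ℝ) (Qm u '' A) := by
  rw [Gm_image hg hu hh hA, flat_vol m hu hh]
  · exact hAm.image_of_continuousOn_injOn (continuous_Qm u).continuousOn hinj
  · rintro _ ⟨x, -, rfl⟩
    exact inner_Qm hu x

theorem cmp1 (hg : GaugeLike g) (hu : ‖u‖ = 1) (hh : 0 < h) (hAm : MeasurableSet A)
    (hA : ∀ x ∈ A, g x = 1) (hinj : InjOn (Qm u) A)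
    (hL : ∀ x ∈ rad g ⁻¹' A ∩ shl g, ∀ y ∈ rad g ⁻¹' A ∩ shl g,
      ‖Gm g u h x - Gm g u h y‖ ≤ L * ‖x - y‖) :
    cm m * ENNReal.ofReal h * Measure.hausdorffMeasure (m : ℝ) (Qm u '' A) ≤
      (L : ℝ≥0∞) ^ (m + 1) * coneM g A := by
  rw [← vol_Gm_image hg hu hh hAm hA hinj, hg.coneM_apply hAm]
  exact vol_lip hL

theorem cmp2 (hg : GaugeLike g) (hu : ‖u‖ = 1) (hh : 0 < h) (hAm : MeasurableSet A)
    (hA : ∀ x ∈ A, g x = 1) (hinj : InjOn (Qm u) A)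
    (hL : ∀ x ∈ rad g ⁻¹' A ∩ shl g, ∀ y ∈ rad g ⁻¹' A ∩ shl g,
      ‖x - y‖ ≤ L * ‖Gm g u h x - Gm g u h y‖) :
    coneM g A ≤ (L : ℝ≥0∞) ^ (m + 1) *
      (cm m * ENNReal.ofReal h * Measure.hausdorffMeasure (m : ℝ) (Qm u '' A)) := by
  rw [← vol_Gm_image hg hu hh hAm hA hinj, hg.coneM_apply hAm]
  exact vol_antilip hL

theorem haus_Qm_le (hu : ‖u‖ = 1) : Measure.hausdorffMeasure (m : ℝ) (Qm u '' A) ≤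
    Measure.hausdorffMeasure (m : ℝ) A := by
  have : LipschitzWith 1 (Qm u) := LipschitzWith.of_dist_le_mul fun x y => by
    rw [dist_eq_norm, dist_eq_norm, Qm_sub, NNReal.coe_one, one_mul]
    exact norm_Qm_le hu _
  simpa using this.hausdorffMeasure_image_le (Nat.cast_nonneg (α := ℝ) m) A

theorem injOn_of_anti {n : ℕ} {f : Euc n → Euc n} {A : Set (Euc n)} {L : ℝ≥0}
    (h : ∀ x ∈ A, ∀ y ∈ A, ‖x - y‖ ≤ L * ‖f x - f y‖) : InjOn f A := by
  intro x hx y hy hxy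
  have := h x hx y hy
  rw [hxy, sub_self, norm_zero, mul_zero] at this
  exact sub_eq_zero.1 (norm_le_zero_iff.1 this)

theorem rough (hg : GaugeLike g) {x₀ : Euc (m + 1)} (hx₀ : g x₀ = 1) :
    ∃ U : Set (Euc (m + 1)), IsOpen U ∧ x₀ ∈ U ∧ ∃ C : ℝ≥0∞, C ≠ ⊤ ∧
      ∀ A, MeasurableSet A → A ⊆ U → (∀ x ∈ A, g x = 1) →
        Measure.hausdorffMeasure (m : ℝ) A ≤ C * coneM g A := by
  obtain ⟨C, hC, hgC, hlip⟩ := hg.lip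
  have hx0 : x₀ ≠ 0 := by
    rintro rfl
    rw [hg.zero] at hx₀
    norm_num at hx₀
  have hn : 0 < ‖x₀‖ := norm_pos_iff.2 hx0
  set u : Euc (m + 1) := ‖x₀‖⁻¹ • x₀ with hu_def
  have hu : ‖u‖ = 1 := by rw [hu_def, norm_smul, norm_inv, norm_norm, inv_mul_cancel₀ hn.ne']
  have key : ∀ x ∈ ball x₀ (1 / (2 * C)), ∀ y, g x = 1 → g y = 1 →
      ⟪y - x, u⟫ / ‖x₀‖ ≤ 2 * C * ‖Qm u (y - x)‖ := by
    intro x hx y hgx hgy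
    set w := Qm u (y - x) with hw
    set a := ⟪y - x, u⟫ / ‖x₀‖ with ha
    by_cases hneg : a ≤ 0
    · exact hneg.trans (by positivity)
    push Not at hneg
    have hdec : y - x = w + a • x₀ := by
      rw [hw, Qm, ha, hu_def, smul_smul]
      simp only [div_eq_mul_inv]
      module
    have e : (1 + a) • x = (y + a • (x - x₀)) + -w := by
      have : y = x + (w + a • x₀) := by rw [← hdec]; module
      rw [this]
      module
    have h1 : (1 + a) * g x ≤ g y + a * g (x - x₀) + g (-w) := by
      rw [← hg.smul _ _ (by positivity), e, ← hg.smul a _ hneg.le]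
      exact (hg.add _ _).trans (by gcongr; exact hg.add _ _)
    have h2 := hgC (x - x₀)
    have h3 := hgC (-w)
    rw [norm_neg] at h3
    rw [mem_ball, dist_eq_norm, lt_div_iff₀ (by positivity)] at hx
    rw [hgx, hgy] at h1
    have h4 : a * g (x - x₀) ≤ a * (1 / 2) := by
      gcongr
      nlinarith
    linarith
  set L : ℝ := 1 + 2 * C * ‖x₀‖ with hL
  have hLpos : 0 < L := by positivity
  have key2 : ∀ x ∈ ball x₀ (1 / (2 * C)), ∀ y ∈ ball x₀ (1 / (2 * C)), g x = 1 → g y = 1 →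
      ‖x - y‖ ≤ L * ‖Qm u x - Qm u y‖ := by
    intro x hx y hy hgx hgy
    have k1 := key x hx y hgx hgy
    have k2 := key y hy x hgy hgx
    rw [← neg_sub x y, ← neg_one_smul ℝ (x - y), Qm_smul, norm_smul, inner_smul_left] at k1
    simp only [norm_neg, norm_one, one_mul, RCLike.conj_to_real, neg_mul] at k1
    rw [Qm_sub]
    have h1 : x - y = Qm u (x - y) + ⟪x - y, u⟫ • u := by rw [Qm]; module
    have h2 : |⟪x - y, u⟫| ≤ 2 * C * ‖x₀‖ * ‖Qm u (x - y)‖ := by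
      rw [div_le_iff₀ hn] at k1 k2
      rw [abs_le]
      constructor <;> linarith
    calc ‖x - y‖ ≤ ‖Qm u (x - y)‖ + ‖⟪x - y, u⟫ • u‖ := by
          conv_lhs => rw [h1]
          exact norm_add_le _ _
      _ ≤ L * ‖Qm u (x - y)‖ := by
          rw [norm_smul, hu, mul_one, Real.norm_eq_abs]
          linarith
  obtain ⟨L', hL'⟩ : ∃ L' : ℝ≥0, (L' : ℝ) = L := ⟨⟨L, hLpos.le⟩, rfl⟩
  obtain ⟨D, hD⟩ : ∃ D : ℝ≥0, (D : ℝ) = 1 + C := ⟨⟨1 + C, by positivity⟩, rfl⟩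
  refine ⟨ball x₀ (1 / (2 * C)), isOpen_ball, mem_ball_self (by positivity),
    (L' : ℝ≥0∞) ^ m * ((cm m)⁻¹ * (D : ℝ≥0∞) ^ (m + 1)),
      ?_, ?_⟩
  · refine ENNReal.mul_ne_top (ENNReal.pow_ne_top ENNReal.coe_ne_top)
      (ENNReal.mul_ne_top (ENNReal.inv_ne_top.2 (cm_ne_zero m)) (ENNReal.pow_ne_top ENNReal.coe_ne_top))
  · intro A hAm hAU hA
    have hanti : ∀ x ∈ A, ∀ y ∈ A, ‖x - y‖ ≤ L' * ‖Qm u x - Qm u y‖ := by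
      rw [hL']
      exact fun x hx y hy => key2 x (hAU hx) y (hAU hy) (hA x hx) (hA y hy)
    have c1 := cmp1 (L := D) hg hu one_pos hAm hA (injOn_of_anti hanti) (by
      intro x _ y _
      rw [Gm_eq, Gm_eq]
      have : Qm u x + (1 * g x) • u - (Qm u y + (1 * g y) • u) =
        Qm u (x - y) + (g x - g y) • u := by rw [← Qm_sub]; module
      rw [this]
      refine (norm_add_le _ _).trans ?_
      rw [norm_smul, hu, mul_one, Real.norm_eq_abs]
      have h1 := hlip x y
      have h2 := norm_Qm_le hu (x - y)
      rw [hD]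
      linarith)
    refine (haus_antilip hanti).trans ?_
    rw [mul_assoc, mul_assoc]
    gcongr
    rw [ENNReal.ofReal_one, mul_one] at c1
    rw [← ENNReal.mul_le_mul_iff_right (cm_ne_zero m) (cm_ne_top m), ← mul_assoc _ (cm m)⁻¹,
      ENNReal.mul_inv_cancel (cm_ne_zero m) (cm_ne_top m), one_mul]
    exact c1

end cmp

section fine
variable {m : ℕ} {g : Euc (m + 1) → ℝ}

theorem fine_local (hg : GaugeLike g) {x₀ : Euc (m + 1)} (hx₀ : g x₀ = 1)
    (hd : DifferentiableAt ℝ g x₀) {L : ℝ≥0} (hL : 1 < L) :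
    ∃ U : Set (Euc (m + 1)), IsOpen U ∧ x₀ ∈ U ∧ ∃ h₀ : ℝ≥0∞,
      (∀ A, MeasurableSet A → A ⊆ U → (∀ x ∈ A, g x = 1) →
        coneM g A ≤ (L : ℝ≥0∞) ^ (m + 1) * (cm m * h₀ * Measure.hausdorffMeasure (m : ℝ) A) ∧
        cm m * h₀ * Measure.hausdorffMeasure (m : ℝ) A ≤ (L : ℝ≥0∞) ^ (2 * m + 1) * coneM g A) ∧
      ∀ x ∈ U, g x = 1 → DifferentiableAt ℝ g x → HH g x ≤ L * h₀ ∧ h₀ ≤ L * HH g x := by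
  obtain ⟨C, hC, hgC, hlip⟩ := hg.lip
  have hL1 : (1 : ℝ) < L := by exact_mod_cast hL
  set d := fderiv ℝ g x₀ with hd_def
  have hdx : d x₀ = 1 := by rw [hd_def, hg.euler hd, hx₀]
  have hd0 : d ≠ 0 := by
    intro h
    rw [h] at hdx
    simp at hdx
  have hdn : 0 < ‖d‖ := norm_pos_iff.2 hd0
  set h₀ : ℝ := ‖d‖⁻¹ with hh₀
  have hh : 0 < h₀ := by positivity
  set ξ := (InnerProductSpace.toDual ℝ (Euc (m + 1))).symm d with hξ
  have hξi : ∀ x, ⟪x, ξ⟫ = d x := by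
    intro x
    rw [real_inner_comm, hξ, InnerProductSpace.toDual_symm_apply]
  have hξn : ‖ξ‖ = ‖d‖ := by rw [hξ, LinearIsometryEquiv.norm_map]
  set u := h₀ • ξ with hu_def
  have hu : ‖u‖ = 1 := by
    rw [hu_def, norm_smul, hξn, Real.norm_of_nonneg hh.le, hh₀, inv_mul_cancel₀ hdn.ne']
  have hui : ∀ x, ⟪x, u⟫ = h₀ * d x := by
    intro x
    rw [hu_def, inner_smul_right, hξi]
  set ε : ℝ := 1 - (L : ℝ)⁻¹ with hε_def
  have hLinv : (L : ℝ)⁻¹ < 1 := inv_lt_one_of_one_lt₀ hL1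
  have hε : 0 < ε := by rw [hε_def]; linarith
  set M : ℝ := 1 + C * (‖x₀‖ + 2) with hM
  have hM1 : 1 ≤ M := by
    have : 0 ≤ C * (‖x₀‖ + 2) := by positivity
    linarith
  have hMpos : 0 < M := by linarith
  set ε₁ : ℝ := ε * ‖d‖ / M with hε₁
  have hε₁pos : 0 < ε₁ := by positivity
  have hε₁M : h₀ * (ε₁ * M) = ε := by
    rw [hε₁, hh₀]; field_simp
  obtain ⟨r', hr', hstr'⟩ := hg.strict hd hε₁pos
  obtain ⟨r, hr, hr1, hstr⟩ : ∃ r : ℝ, 0 < r ∧ r ≤ 1 ∧ ∀ x ∈ ball x₀ r, ∀ y ∈ ball x₀ r,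
      |g x - g y - d (x - y)| ≤ ε₁ * ‖x - y‖ :=
    ⟨min r' 1, by positivity, min_le_right _ _, fun x hx y hy =>
      hstr' x (ball_subset_ball (min_le_left _ _) hx) y (ball_subset_ball (min_le_left _ _) hy)⟩
  -- Lipschitz estimate for the error on the cone
  have herr : ∀ x y, 0 < g x → g x ≤ 1 → 0 < g y → g y ≤ 1 → rad g x ∈ ball x₀ r →
      rad g y ∈ ball x₀ r → |(g x - d x) - (g y - d y)| ≤ ε₁ * M * ‖x - y‖ := by
    intro x y hx hx1 hy hy1 hxr hyr
    set a := rad g x with ha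
    set b := rad g y with hb
    set t := g x with ht
    set s := g y with hs
    have hxa : x = t • a := by rw [ha, rad, smul_inv_smul₀ hx.ne']
    have hyb : y = s • b := by rw [hb, rad, smul_inv_smul₀ hy.ne']
    have hga : g a = 1 := by
      rw [ha, rad, hg.smul _ _ (by positivity), inv_mul_cancel₀ hx.ne']
    have hgb : g b = 1 := by
      rw [hb, rad, hg.smul _ _ (by positivity), inv_mul_cancel₀ hy.ne']
    have h1 := hstr a hxr b hyr
    have h2 := hstr b hyr x₀ (mem_ball_self hr)
    have hts := hlip x y
    rw [← ht, ← hs] at hts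
    rw [mem_ball, dist_eq_norm] at hyr
    rw [hga, hgb, sub_self, zero_sub, abs_neg, map_sub] at h1
    rw [hgb, hx₀, sub_self, zero_sub, abs_neg, map_sub, hdx] at h2
    have hbn : ‖b‖ ≤ ‖x₀‖ + 1 := by
      have : b = x₀ + (b - x₀) := by module
      rw [this]
      exact (norm_add_le _ _).trans (by linarith)
    have h3 : t * ‖a - b‖ ≤ ‖x - y‖ + |t - s| * (‖x₀‖ + 1) := by
      have : t • (a - b) = (x - y) - (t - s) • b := by rw [hxa, hyb]; module
      rw [← Real.norm_of_nonneg hx.le, ← norm_smul, Real.norm_of_nonneg hx.le, this]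
      refine (norm_sub_le _ _).trans ?_
      rw [norm_smul, Real.norm_eq_abs]
      gcongr
    have e : (t - d x) - (s - d y) = -(t * (d a - d b)) - (t - s) * (d b - 1) := by
      conv_lhs => rw [hxa, hyb]
      rw [map_smul, map_smul, smul_eq_mul, smul_eq_mul]
      ring
    rw [e]
    refine (abs_sub _ _).trans ?_
    rw [abs_neg, abs_mul, abs_mul, abs_of_pos hx]
    calc t * |d a - d b| + |t - s| * |d b - 1|
        ≤ t * (ε₁ * ‖a - b‖) + |t - s| * (ε₁ * 1) := by
          gcongr
          refine h2.trans ?_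
          gcongr
          linarith
      _ = ε₁ * (t * ‖a - b‖ + |t - s|) := by ring
      _ ≤ ε₁ * (‖x - y‖ + |t - s| * (‖x₀‖ + 1) + |t - s|) := by gcongr
      _ = ε₁ * (‖x - y‖ + |t - s| * (‖x₀‖ + 2)) := by ring
      _ ≤ ε₁ * (‖x - y‖ + C * ‖x - y‖ * (‖x₀‖ + 2)) := by gcongr
      _ = ε₁ * M * ‖x - y‖ := by rw [hM]; ring
  have hG : ∀ x y, 0 < g x → g x ≤ 1 → 0 < g y → g y ≤ 1 → rad g x ∈ ball x₀ r →
      rad g y ∈ ball x₀ r → ‖(Gm g u h₀ x - Gm g u h₀ y) - (x - y)‖ ≤ ε * ‖x - y‖ := by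
    intro x y hx hx1 hy hy1 hxr hyr
    have := herr x y hx hx1 hy hy1 hxr hyr
    have e : (Gm g u h₀ x - Gm g u h₀ y) - (x - y) = (h₀ * ((g x - d x) - (g y - d y))) • u := by
      rw [Gm, Gm, hui, hui]; module
    rw [e, norm_smul, hu, mul_one, Real.norm_eq_abs, abs_mul, abs_of_pos hh]
    calc _ ≤ h₀ * (ε₁ * M * ‖x - y‖) := by gcongr
      _ = ε * ‖x - y‖ := by rw [← hε₁M]; ring
  have hG1 : ∀ x y, 0 < g x → g x ≤ 1 → 0 < g y → g y ≤ 1 → rad g x ∈ ball x₀ r →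
      rad g y ∈ ball x₀ r → ‖Gm g u h₀ x - Gm g u h₀ y‖ ≤ L * ‖x - y‖ := by
    intro x y hx hx1 hy hy1 hxr hyr
    have h1 := hG x y hx hx1 hy hy1 hxr hyr
    have h2 := norm_le_norm_add_norm_sub' (Gm g u h₀ x - Gm g u h₀ y) (x - y)
    have h3 : 1 + ε ≤ L := by
      rw [hε_def]
      have : (L : ℝ) * (L : ℝ)⁻¹ = 1 := mul_inv_cancel₀ (by linarith)
      nlinarith
    nlinarith [norm_nonneg (x - y)]
  have hG2 : ∀ x y, 0 < g x → g x ≤ 1 → 0 < g y → g y ≤ 1 → rad g x ∈ ball x₀ r →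
      rad g y ∈ ball x₀ r → ‖x - y‖ ≤ L * ‖Gm g u h₀ x - Gm g u h₀ y‖ := by
    intro x y hx hx1 hy hy1 hxr hyr
    have h1 := hG x y hx hx1 hy hy1 hxr hyr
    have h2 := norm_le_norm_add_norm_sub (Gm g u h₀ x - Gm g u h₀ y) (x - y)
    have h3 : (L : ℝ)⁻¹ * ‖x - y‖ ≤ ‖Gm g u h₀ x - Gm g u h₀ y‖ := by
      rw [hε_def] at h1
      linarith
    rwa [inv_mul_le_iff₀ (by linarith)] at h3
  refine ⟨ball x₀ r, isOpen_ball, mem_ball_self hr, ENNReal.ofReal h₀, ?_, ?_⟩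
  · intro A hAm hAU hA
    have hrad : ∀ x ∈ A, rad g x = x := fun x hx => by rw [rad, hA x hx, inv_one, one_smul]
    have hanti : ∀ x ∈ A, ∀ y ∈ A, ‖x - y‖ ≤ L * ‖Qm u x - Qm u y‖ := by
      intro x hx y hy
      have := hG2 x y (by rw [hA x hx]; exact one_pos) (hA x hx).le
        (by rw [hA y hy]; exact one_pos) (hA y hy).le (by rw [hrad x hx]; exact hAU hx)
        (by rw [hrad y hy]; exact hAU hy)
      rwa [Gm_eq, Gm_eq, hA x hx, hA y hy, add_sub_add_right_eq_sub] at this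
    have hs : ∀ x ∈ rad g ⁻¹' A ∩ shl g, 0 < g x ∧ g x ≤ 1 ∧ rad g x ∈ ball x₀ r :=
      fun x hx => ⟨lt_of_lt_of_le (by norm_num) hx.2.1, hx.2.2.le, hAU hx.1⟩
    have c1 := cmp1 (L := L) hg hu hh hAm hA (injOn_of_anti hanti) (fun x hx y hy =>
      hG1 x y (hs x hx).1 (hs x hx).2.1 (hs y hy).1 (hs y hy).2.1 (hs x hx).2.2 (hs y hy).2.2)
    have c2 := cmp2 (L := L) hg hu hh hAm hA (injOn_of_anti hanti) (fun x hx y hy =>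
      hG2 x y (hs x hx).1 (hs x hx).2.1 (hs y hy).1 (hs y hy).2.1 (hs x hx).2.2 (hs y hy).2.2)
    constructor
    · exact c2.trans (mul_le_mul' le_rfl (mul_le_mul' le_rfl (haus_Qm_le hu)))
    · calc _ ≤ cm m * ENNReal.ofReal h₀ * ((L : ℝ≥0∞) ^ m *
            Measure.hausdorffMeasure (m : ℝ) (Qm u '' A)) := by
            gcongr
            exact haus_antilip hanti
        _ = (L : ℝ≥0∞) ^ m * (cm m * ENNReal.ofReal h₀ *
            Measure.hausdorffMeasure (m : ℝ) (Qm u '' A)) := by ring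
        _ ≤ (L : ℝ≥0∞) ^ m * ((L : ℝ≥0∞) ^ (m + 1) * coneM g A) := by gcongr
        _ = _ := by ring
  · intro x hxU hgx hdiff
    have hlo : LipschitzOnWith ⟨ε₁, hε₁pos.le⟩ (fun z => g z - d z) (ball x₀ r) := by
      refine LipschitzOnWith.of_dist_le_mul fun a ha b hb => ?_
      rw [Real.dist_eq, dist_eq_norm]
      have := hstr a ha b hb
      rw [map_sub] at this
      have e : g a - d a - (g b - d b) = g a - g b - (d a - d b) := by ring
      rw [e]
      exact this
    have hder : HasFDerivAt (fun z => g z - d z) (fderiv ℝ g x - d) x :=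
      hdiff.hasFDerivAt.sub d.hasFDerivAt
    have hle : ‖fderiv ℝ g x - d‖ ≤ ε₁ :=
      hder.le_of_lipschitzOn (isOpen_ball.mem_nhds hxU) hlo
    have hε₁d : ε₁ ≤ ε * ‖d‖ := by
      rw [hε₁]
      exact div_le_self (by positivity) hM1
    have hne : fderiv ℝ g x ≠ 0 := by
      intro h
      have := hg.euler hdiff
      rw [h, hgx] at this
      simp at this
    have hnp : 0 < ‖fderiv ℝ g x‖ := norm_pos_iff.2 hne
    have hHH : HH g x = ENNReal.ofReal ‖fderiv ℝ g x‖⁻¹ := by rw [HH, if_neg hne]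
    have hLc : (L : ℝ≥0∞) = ENNReal.ofReal (L : ℝ) := by simp
    have n1 : ‖fderiv ℝ g x‖ ≤ ‖d‖ + ε₁ := by
      have : fderiv ℝ g x = d + (fderiv ℝ g x - d) := by abel
      rw [this]
      exact (norm_add_le _ _).trans (by linarith)
    have n2 : ‖d‖ ≤ ‖fderiv ℝ g x‖ + ε₁ := by
      have h := norm_sub_le (fderiv ℝ g x) (fderiv ℝ g x - d)
      rw [sub_sub_cancel] at h
      linarith
    have hLL : (L : ℝ) * (L : ℝ)⁻¹ = 1 := mul_inv_cancel₀ (by linarith)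
    rw [hHH, hLc, ← ENNReal.ofReal_mul (by positivity), ← ENNReal.ofReal_mul (by positivity)]
    constructor
    · apply ENNReal.ofReal_le_ofReal
      rw [hh₀, ← div_eq_mul_inv, inv_eq_one_div, div_le_div_iff₀ hnp hdn]
      have : (L : ℝ)⁻¹ * ‖d‖ ≤ ‖fderiv ℝ g x‖ := by
        rw [hε_def] at hε₁d
        linarith
      rw [inv_mul_le_iff₀ (by linarith)] at this
      linarith
    · apply ENNReal.ofReal_le_ofReal
      rw [hh₀, ← div_eq_mul_inv, inv_eq_one_div, div_le_div_iff₀ hdn hnp]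
      have h3 : 1 + ε ≤ L := by
        rw [hε_def]
        nlinarith
      have h4 := mul_le_mul_of_nonneg_right h3 hdn.le
      linarith

end fine

theorem local_global {n : ℕ} {α β : Measure (Euc n)} {S : Set (Euc n)} {C : ℝ≥0∞}
    (h : ∀ x ∈ S, ∃ U, IsOpen U ∧ x ∈ U ∧ ∀ A, MeasurableSet A → A ⊆ U → A ⊆ S → α A ≤ C * β A)
    {A : Set (Euc n)} (hA : MeasurableSet A) (hAS : A ⊆ S) : α A ≤ C * β A := by
  rcases S.eq_empty_or_nonempty with hS | hS
  · rw [hS, subset_empty_iff] at hAS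
    simp [hAS]
  choose! U hUo hUx hU using h
  obtain ⟨t, hts, htc, htU⟩ := TopologicalSpace.countable_cover_nhdsWithin
    (s := S) (f := U) (fun x hx => mem_nhdsWithin_of_mem_nhds ((hUo x hx).mem_nhds (hUx x hx)))
  have hne : t.Nonempty := by
    rcases t.eq_empty_or_nonempty with ht | ht
    · subst ht
      obtain ⟨x, hx⟩ := hS
      simpa using htU hx
    · exact ht
  obtain ⟨f, rfl⟩ := htc.exists_eq_range hne
  have hfS : ∀ k, f k ∈ S := fun k => hts (mem_range_self k)
  have hdm : ∀ k, MeasurableSet (disjointed (fun k => U (f k)) k) := fun k =>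
    MeasurableSet.disjointed (fun k => (hUo _ (hfS k)).measurableSet) k
  have hAe : A = ⋃ k, A ∩ disjointed (fun k => U (f k)) k := by
    rw [← inter_iUnion, iUnion_disjointed, eq_comm, inter_eq_left]
    intro x hx
    have := htU (hAS hx)
    simpa using this
  have hdis : Pairwise (Function.onFun Disjoint fun k => A ∩ disjointed (fun k => U (f k)) k) :=
    fun i j hij => (disjoint_disjointed _ hij).mono inter_subset_right inter_subset_right
  have hm : ∀ k, MeasurableSet (A ∩ disjointed (fun k => U (f k)) k) := fun k => hA.inter (hdm k)
  rw [hAe, measure_iUnion hdis hm, measure_iUnion hdis hm, ← ENNReal.tsum_mul_left]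
  refine ENNReal.tsum_le_tsum fun k => hU (f k) (hfS k) _ (hm k) ?_ (inter_subset_left.trans hAS)
  exact inter_subset_right.trans (disjointed_subset _ k)

theorem le_of_forall_pow {a b : ℝ≥0∞} (k : ℕ) (h : ∀ L : ℝ≥0, 1 < L → a ≤ (L : ℝ≥0∞) ^ k * b) :
    a ≤ b := by
  have h1 : Tendsto (fun L : ℝ≥0 => (L : ℝ≥0∞) ^ k * b) (𝓝[>] 1) (𝓝 (((1 : ℝ≥0) : ℝ≥0∞) ^ k * b)) := by
    refine ENNReal.Tendsto.mul_const ?_ (Or.inl (by simp))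
    have : Continuous fun L : ℝ≥0 => (L : ℝ≥0∞) ^ k := (ENNReal.continuous_pow k).comp ENNReal.continuous_coe
    exact (this.tendsto 1).mono_left nhdsWithin_le_nhds
  have h2 := ge_of_tendsto h1 (eventually_nhdsWithin_of_forall fun L hL => h L hL)
  simpa using h2

namespace GaugeLike
variable {m : ℕ} {g : Euc (m + 1) → ℝ}

theorem haus_null (hg : GaugeLike g) {N : Set (Euc (m + 1))} (hN : MeasurableSet N)
    (hN1 : ∀ x ∈ N, g x = 1) (h0 : coneM g N = 0) : Measure.hausdorffMeasure (m : ℝ) N = 0 := by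
  refine measure_null_of_locally_null N fun x hx => ?_
  obtain ⟨U, hU, hxU, C, hC, h⟩ := rough hg (hN1 x hx)
  refine ⟨N ∩ U, inter_mem_nhdsWithin N (hU.mem_nhds hxU), ?_⟩
  have := h (N ∩ U) (hN.inter hU.measurableSet) inter_subset_right (fun x hx => hN1 x hx.1)
  rw [measure_mono_null inter_subset_left h0, mul_zero] at this
  exact nonpos_iff_eq_zero.1 this

theorem isCompact_lvl (hg : GaugeLike g) : IsCompact {x | g x = 1} := by
  refine Metric.isCompact_of_isClosed_isBounded (isClosed_eq hg.cont continuous_const) ?_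
  obtain ⟨r, hr, h⟩ := hg.lower
  refine (Metric.isBounded_closedBall (x := 0) (r := 1 / r)).subset fun x hx => ?_
  rw [mem_closedBall_zero_iff, le_div_iff₀ hr]
  have : g x = 1 := hx
  linarith [h x]

theorem haus_finite (hg : GaugeLike g) :
    Measure.hausdorffMeasure (m : ℝ) {x | g x = 1} < ⊤ := by
  have := hg.isFinite_coneM
  refine hg.isCompact_lvl.measure_lt_top_of_nhdsWithin fun x hx => ?_
  obtain ⟨U, hU, hxU, C, hC, h⟩ := rough hg hx
  refine ⟨{x | g x = 1} ∩ U, inter_mem_nhdsWithin _ (hU.mem_nhds hxU), ?_⟩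
  refine lt_of_le_of_lt (h _ (hg.isCompact_lvl.measurableSet.inter hU.measurableSet)
    inter_subset_right (fun x hx => hx.1)) ?_
  exact ENNReal.mul_lt_top hC.lt_top (measure_lt_top _ _)

theorem coneM_compl (hg : GaugeLike g) : coneM g {x | g x = 1}ᶜ = 0 := by
  rw [hg.coneM_apply hg.isCompact_lvl.measurableSet.compl]
  convert measure_empty (μ := volume)
  ext x
  simp only [mem_inter_iff, mem_preimage, mem_compl_iff, mem_empty_iff_false, iff_false, not_and]
  intro h1 h2
  have hx : 0 < g x := lt_of_lt_of_le (by norm_num) h2.1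
  apply h1
  show g (rad g x) = 1
  rw [rad, hg.smul _ _ (by positivity), inv_mul_cancel₀ hx.ne']

theorem haus_nondiff (hg : GaugeLike g) :
    Measure.hausdorffMeasure (m : ℝ) ({x | g x = 1} ∩ {x | ¬ DifferentiableAt ℝ g x}) = 0 := by
  refine hg.haus_null ?_ (fun x hx => hx.1) (measure_mono_null inter_subset_right (hg.coneM_nondiff hg))
  exact hg.isCompact_lvl.measurableSet.inter (measurableSet_of_differentiableAt ℝ g).compl

theorem coneM_eq (hg : GaugeLike g) : coneM g =
    cm m • ((Measure.hausdorffMeasure (m : ℝ)).restrict {x | g x = 1}).withDensity (HH g) := by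
  set β := cm m • ((Measure.hausdorffMeasure (m : ℝ)).restrict {x | g x = 1}).withDensity (HH g)
    with hβ
  set S := {x | g x = 1} ∩ {x | DifferentiableAt ℝ g x} with hS
  have hSm : MeasurableSet S :=
    hg.isCompact_lvl.measurableSet.inter (measurableSet_of_differentiableAt ℝ g)
  have hβS : ∀ A, MeasurableSet A → A ⊆ S →
      β A = cm m * ∫⁻ x in A, HH g x ∂(Measure.hausdorffMeasure (m : ℝ)) := by
    intro A hA hAS
    rw [hβ, Measure.smul_apply, withDensity_apply _ hA, Measure.restrict_restrict hA,
      inter_eq_left.2 (hAS.trans inter_subset_left), smul_eq_mul]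
  have hβc : β Sᶜ = 0 := by
    rw [hβ, Measure.smul_apply, smul_eq_mul]
    refine mul_eq_zero_of_right _ (withDensity_absolutelyContinuous _ _ ?_)
    rw [Measure.restrict_apply hSm.compl]
    refine measure_mono_null ?_ hg.haus_nondiff
    rintro x ⟨h1, h2⟩
    exact ⟨h2, fun h => h1 ⟨h2, h⟩⟩
  have hcc : coneM g Sᶜ = 0 := by
    rw [hS, compl_inter, measure_union_null_iff]
    exact ⟨hg.coneM_compl, hg.coneM_nondiff hg⟩
  have hfine : ∀ L : ℝ≥0, 1 < L → ∀ x ∈ S, ∃ U, IsOpen U ∧ x ∈ U ∧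
      ∀ A, MeasurableSet A → A ⊆ U → A ⊆ S →
        (coneM g A ≤ (L : ℝ≥0∞) ^ (m + 2) * β A ∧ β A ≤ (L : ℝ≥0∞) ^ (2 * m + 2) * coneM g A) := by
    intro L hL x hx
    obtain ⟨U, hU, hxU, h₀, h1, h2⟩ := fine_local hg hx.1 hx.2 hL
    refine ⟨U, hU, hxU, fun A hA hAU hAS => ?_⟩
    obtain ⟨c1, c2⟩ := h1 A hA hAU (fun x hx => (hAS hx).1)
    rw [hβS A hA hAS]
    constructor
    · refine c1.trans ?_
      have : h₀ * Measure.hausdorffMeasure (m : ℝ) A ≤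
          L * ∫⁻ x in A, HH g x ∂(Measure.hausdorffMeasure (m : ℝ)) := by
        rw [← setLIntegral_const, ← lintegral_const_mul _ (measurable_HH g)]
        exact setLIntegral_mono' hA fun x hx => (h2 x (hAU hx) (hAS hx).1 (hAS hx).2).2
      calc _ = (L : ℝ≥0∞) ^ (m + 1) * (cm m * (h₀ * Measure.hausdorffMeasure (m : ℝ) A)) := by ring
        _ ≤ (L : ℝ≥0∞) ^ (m + 1) * (cm m * (L * ∫⁻ x in A, HH g x ∂(Measure.hausdorffMeasure (m : ℝ)))) := by
          gcongr
        _ = _ := by ring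
    · have : ∫⁻ x in A, HH g x ∂(Measure.hausdorffMeasure (m : ℝ)) ≤
          L * h₀ * Measure.hausdorffMeasure (m : ℝ) A := by
        rw [← setLIntegral_const]
        exact setLIntegral_mono' hA fun x hx => (h2 x (hAU hx) (hAS hx).1 (hAS hx).2).1
      calc _ ≤ cm m * (L * h₀ * Measure.hausdorffMeasure (m : ℝ) A) := by gcongr
        _ = L * (cm m * h₀ * Measure.hausdorffMeasure (m : ℝ) A) := by ring
        _ ≤ L * ((L : ℝ≥0∞) ^ (2 * m + 1) * coneM g A) := by gcongr
        _ = _ := by ring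
  have hES : ∀ A, MeasurableSet A → A ⊆ S → coneM g A = β A := by
    intro A hA hAS
    apply le_antisymm
    · refine le_of_forall_pow (m + 2) fun L hL => local_global (fun x hx => ?_) hA hAS
      obtain ⟨U, hU, hxU, h⟩ := hfine L hL x hx
      exact ⟨U, hU, hxU, fun A a b c => (h A a b c).1⟩
    · refine le_of_forall_pow (2 * m + 2) fun L hL => local_global (fun x hx => ?_) hA hAS
      obtain ⟨U, hU, hxU, h⟩ := hfine L hL x hx
      exact ⟨U, hU, hxU, fun A a b c => (h A a b c).2⟩
  ext A hA
  have e1 : β (A \ S) = 0 := measure_mono_null (fun x hx => hx.2) hβc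
  have e2 : coneM g (A \ S) = 0 := measure_mono_null (fun x hx => hx.2) hcc
  rw [← measure_inter_add_sdiff A hSm, ← measure_inter_add_sdiff (μ := β) A hSm,
    hES _ (hA.inter hSm) inter_subset_right, e1, e2]

end GaugeLike

section bodies
variable {n : ℕ} {K : Set (Euc n)}

theorem norm_gl : GaugeLike (fun x : Euc n => ‖x‖) where
  add := norm_add_le
  smul t x ht := by rw [norm_smul, Real.norm_of_nonneg ht]
  lower := ⟨1, one_pos, fun x => by rw [one_mul]⟩
  upper := ⟨1, one_pos, fun x => by rw [one_mul]⟩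

theorem gauge_gl (hK : IsConvexBody K) (h0 : (0 : Euc n) ∈ interior K) :
    GaugeLike (gauge K) := by
  have hn : K ∈ 𝓝 (0 : Euc n) := mem_interior_iff_mem_nhds.1 h0
  have habs : Absorbent ℝ K := absorbent_nhds_zero hn
  refine ⟨gauge_add_le hK.2.1 habs, fun t x ht => ?_, ?_, ?_⟩
  · rw [gauge_smul_of_nonneg ht, smul_eq_mul]
  · obtain ⟨R, hR⟩ := hK.1.isBounded.subset_closedBall (0 : Euc n)
    have hR' : K ⊆ closedBall 0 (max R 1) := hR.trans (closedBall_subset_closedBall (le_max_left _ _))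
    refine ⟨(max R 1)⁻¹, by positivity, fun x => ?_⟩
    have := le_gauge_of_subset_closedBall (x := x) habs (by positivity) hR'
    rwa [div_eq_inv_mul] at this
  · obtain ⟨r, hr, h⟩ := Metric.mem_nhds_iff.1 hn
    refine ⟨r⁻¹, by positivity, fun x => ?_⟩
    have := mul_gauge_le_norm (x := x) h
    rwa [← div_eq_inv_mul, le_div_iff₀ hr, mul_comm]

theorem gauge_le_one (hK : IsConvexBody K) (h0 : (0 : Euc n) ∈ interior K) {x : Euc n} :
    gauge K x ≤ 1 ↔ x ∈ K := by
  rw [gauge_le_one_iff_mem_closure hK.2.1 (mem_interior_iff_mem_nhds.1 h0),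
    hK.1.isClosed.closure_eq]

theorem frontier_eq (hK : IsConvexBody K) (h0 : (0 : Euc n) ∈ interior K) :
    frontier K = {x | gauge K x = 1} := by
  ext x
  exact (gauge_eq_one_iff_mem_frontier hK.2.1 (mem_interior_iff_mem_nhds.1 h0)).symm

theorem le_supp (hK : IsConvexBody K) (u : Euc n) {y : Euc n} (hy : y ∈ K) :
    ⟪y, u⟫ ≤ suppFn K u := by
  refine le_csSup ?_ (mem_image_of_mem _ hy)
  exact (hK.1.image (by fun_prop)).bddAbove

theorem exists_supp (hK : IsConvexBody K) (u : Euc n) : ∃ x ∈ K, ⟪x, u⟫ = suppFn K u := by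
  have hne : K.Nonempty := hK.2.2.mono interior_subset
  have := (hK.1.image (f := fun y : Euc n => ⟪y, u⟫) (by fun_prop)).sSup_mem (hne.image _)
  obtain ⟨x, hx, h⟩ := this
  exact ⟨x, hx, h⟩

theorem supp_gl (hK : IsConvexBody K) (h0 : (0 : Euc n) ∈ interior K) :
    GaugeLike (suppFn K) := by
  refine ⟨fun u v => ?_, fun t u ht => ?_, ?_, ?_⟩
  · obtain ⟨x, hx, h⟩ := exists_supp hK (u + v)
    rw [← h, inner_add_right]
    exact add_le_add (le_supp hK u hx) (le_supp hK v hx)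
  · apply le_antisymm
    · obtain ⟨x, hx, h⟩ := exists_supp hK (t • u)
      rw [← h, inner_smul_right]
      exact mul_le_mul_of_nonneg_left (le_supp hK u hx) ht
    · obtain ⟨x, hx, h⟩ := exists_supp hK u
      rw [← h, ← inner_smul_right]
      exact le_supp hK _ hx
  · obtain ⟨r, hr, h⟩ := Metric.mem_nhds_iff.1 (mem_interior_iff_mem_nhds.1 h0)
    refine ⟨r / 2, by positivity, fun u => ?_⟩
    rcases eq_or_ne u 0 with rfl | hu
    · rw [norm_zero, mul_zero]
      simpa using le_supp hK (0 : Euc n) (interior_subset h0)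
    have hu' : 0 < ‖u‖ := norm_pos_iff.2 hu
    have hm : (r / 2 * ‖u‖⁻¹) • u ∈ K := by
      apply h
      rw [mem_ball_zero_iff, norm_smul, Real.norm_of_nonneg (by positivity), mul_assoc,
        inv_mul_cancel₀ hu'.ne']
      linarith
    have := le_supp hK u hm
    rw [inner_smul_left, real_inner_self_eq_norm_sq] at this
    refine le_trans (le_of_eq ?_) this
    simp only [conj_trivial]
    field_simp
  · obtain ⟨R, hR⟩ := hK.1.isBounded.subset_closedBall (0 : Euc n)
    refine ⟨max R 1, by positivity, fun u => ?_⟩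
    obtain ⟨x, hx, h⟩ := exists_supp hK u
    rw [← h]
    refine (real_inner_le_norm _ _).trans ?_
    gcongr
    exact (mem_closedBall_zero_iff.1 (hR hx)).trans (le_max_left _ _)

theorem inner_le_gauge_supp (hK : IsConvexBody K) (h0 : (0 : Euc n) ∈ interior K) (z u : Euc n) :
    ⟪z, u⟫ ≤ suppFn K u * gauge K z := by
  have hg := gauge_gl hK h0
  rcases eq_or_ne z 0 with rfl | hz
  · rw [inner_zero_left, hg.zero, mul_zero]
  have hp := hg.pos hz
  have : (gauge K z)⁻¹ • z ∈ K := by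
    rw [← gauge_le_one hK h0, hg.smul _ _ (by positivity), inv_mul_cancel₀ hp.ne']
  have := le_supp hK u this
  rw [inner_smul_left, conj_trivial, inv_mul_le_iff₀ hp] at this
  linarith

/-- The maximizer in direction `u` is a boundary point. -/
theorem gauge_eq_one_of_supp (hK : IsConvexBody K) (h0 : (0 : Euc n) ∈ interior K) {x u : Euc n}
    (hx : x ∈ K) (hu : u ≠ 0) (h : ⟪x, u⟫ = suppFn K u) : gauge K x = 1 := by
  refine le_antisymm ((gauge_le_one hK h0).2 hx) ?_
  have h1 := inner_le_gauge_supp hK h0 x u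
  have h2 := (supp_gl hK h0).pos hu
  rw [h] at h1
  nlinarith

theorem isOuterNormal_iff (hK : IsConvexBody K) (h0 : (0 : Euc n) ∈ interior K) {x u : Euc n} (hu : u ≠ 0) :
    IsOuterNormalAt K u x ↔ x ∈ K ∧ ⟪x, u⟫ = suppFn K u := by
  constructor
  · rintro ⟨h1, h2⟩
    have hx : x ∈ K := hK.1.isClosed.frontier_subset h1
    refine ⟨hx, le_antisymm (le_supp hK u hx) ?_⟩
    obtain ⟨y, hy, h⟩ := exists_supp hK u
    rw [← h]
    exact h2 y hy
  · rintro ⟨h1, h2⟩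
    refine ⟨?_, fun y hy => h2 ▸ le_supp hK u hy⟩
    rw [frontier_eq hK h0]
    exact gauge_eq_one_of_supp hK h0 h1 hu h2

theorem inner_gradient (f : Euc n → ℝ) (x y : Euc n) : ⟪y, gradient f x⟫ = fderiv ℝ f x y := by
  rw [real_inner_comm, gradient, InnerProductSpace.toDual_symm_apply]

theorem norm_gradient (f : Euc n → ℝ) (x : Euc n) : ‖gradient f x‖ = ‖fderiv ℝ f x‖ := by
  rw [gradient, LinearIsometryEquiv.norm_map]

theorem measurable_gradient (f : Euc n → ℝ) : Measurable (gradient f) :=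
  (InnerProductSpace.toDual ℝ (Euc n)).symm.continuous.measurable.comp (measurable_fderiv ℝ f)

/-- At a point of differentiability of the support function the unique boundary point is the
gradient. -/
theorem eq_gradient_supp (hK : IsConvexBody K) {x u : Euc n}
    (hx : x ∈ K) (h : ⟪x, u⟫ = suppFn K u) (hd : DifferentiableAt ℝ (suppFn K) u) :
    x = gradient (suppFn K) u := by
  have := GaugeLike.fderiv_of_min (a := 1) (ℓ := innerSL ℝ x) hd
    (fun z => by rw [one_mul]; exact le_supp hK z hx) (by rw [one_mul]; exact h)
  rw [one_smul] at this
  rw [gradient, this]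
  apply (InnerProductSpace.toDual ℝ (Euc n)).injective
  rw [LinearIsometryEquiv.apply_symm_apply]
  rfl

theorem gradient_supp_spec (hK : IsConvexBody K) {u : Euc n}
    (hd : DifferentiableAt ℝ (suppFn K) u) :
    gradient (suppFn K) u ∈ K ∧ ⟪gradient (suppFn K) u, u⟫ = suppFn K u := by
  obtain ⟨x, hx, h⟩ := exists_supp hK u
  rw [← eq_gradient_supp hK hx h hd]
  exact ⟨hx, h⟩

theorem gaussMapInv_eq (hK : IsConvexBody K) (h0 : (0 : Euc n) ∈ interior K) {u : Euc n}
    (hu : u ≠ 0) (hd : DifferentiableAt ℝ (suppFn K) u) :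
    gaussMapInv K u = gradient (suppFn K) u := by
  have hex : ∃ x, IsOuterNormalAt K u x :=
    ⟨_, (isOuterNormal_iff hK h0 hu).2 (gradient_supp_spec hK hd)⟩
  rw [gaussMapInv, dif_pos hex]
  have := (isOuterNormal_iff hK h0 hu).1 hex.choose_spec
  exact eq_gradient_supp hK this.1 this.2 hd

/-- The gradient of the gauge at a boundary point is the normalized normal. -/
theorem gradient_gauge (hK : IsConvexBody K) (h0 : (0 : Euc n) ∈ interior K) {x u : Euc n}
    (hx : x ∈ K) (hu : u ≠ 0) (h : ⟪x, u⟫ = suppFn K u) (hd : DifferentiableAt ℝ (gauge K) x) :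
    HH (gauge K) x = ENNReal.ofReal (suppFn K u / ‖u‖) := by
  have hg1 := gauge_eq_one_of_supp hK h0 hx hu h
  have hp := (supp_gl hK h0).pos hu
  have := GaugeLike.fderiv_of_min (a := suppFn K u) (ℓ := innerSL ℝ u) hd
    (fun z => by
      rw [innerSL_apply_apply, real_inner_comm]
      exact inner_le_gauge_supp hK h0 z u)
    (by rw [innerSL_apply_apply, real_inner_comm, h, hg1, mul_one])
  have hn : suppFn K u * ‖fderiv ℝ (gauge K) x‖ = ‖u‖ := by
    rw [← innerSL_apply_norm ℝ u, ← this, norm_smul, Real.norm_of_nonneg hp.le]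
  have hu' : 0 < ‖u‖ := norm_pos_iff.2 hu
  have hne : fderiv ℝ (gauge K) x ≠ 0 := by
    intro h'
    rw [h', norm_zero, mul_zero] at hn
    exact hu'.ne hn
  rw [HH, if_neg hne]
  congr 1
  rw [← hn]
  have := norm_pos_iff.2 hne
  field_simp

theorem supp_gaussMap (hK : IsConvexBody K) (h0 : (0 : Euc n) ∈ interior K) {x : Euc n}
    (hx : gauge K x = 1) (hd : DifferentiableAt ℝ (gauge K) x) :
    ENNReal.ofReal (suppFn K (gaussMap K x)) = HH (gauge K) x := by
  have hg := gauge_gl hK h0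
  have hxK : x ∈ K := (gauge_le_one hK h0).1 hx.le
  have hne : gradient (gauge K) x ≠ 0 := by
    intro h
    have := hg.euler hd
    rw [← inner_gradient, h, hx, inner_zero_right] at this
    exact zero_ne_one this
  have hnp := norm_pos_iff.2 hne
  have hex : ∃ u, ‖u‖ = 1 ∧ IsOuterNormalAt K u x := by
    refine ⟨‖gradient (gauge K) x‖⁻¹ • gradient (gauge K) x, ?_, ?_, ?_⟩
    · rw [norm_smul, norm_inv, norm_norm, inv_mul_cancel₀ hnp.ne']
    · rw [frontier_eq hK h0]; exact hx
    · intro y hy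
      rw [inner_smul_right, inner_smul_right, inner_gradient, inner_gradient, hg.euler hd, hx]
      gcongr
      exact (hg.fderiv_le hd y).trans ((gauge_le_one hK h0).2 hy)
  rw [gaussMap, dif_pos hex]
  obtain ⟨h1, h2⟩ := hex.choose_spec
  have hu : hex.choose ≠ 0 := by
    intro h
    rw [h, norm_zero] at h1
    exact zero_ne_one h1
  have h3 := (isOuterNormal_iff hK h0 hu).1 h2
  rw [gradient_gauge hK h0 hxK hu h3.2 hd, h1, div_one]

end bodies

section polar
variable {m : ℕ} {f : Euc (m + 1) → ℝ}

theorem volIoi_shl {c : ℝ} (hc : 0 < c) :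
    Measure.volumeIoiPow m {r : Ioi (0 : ℝ) | 1 / 2 ≤ (r : ℝ) * c ∧ (r : ℝ) * c < 1} =
      kap m * ENNReal.ofReal (c⁻¹ ^ (m + 1)) := by
  have ha : 0 < 1 / 2 * c⁻¹ := by positivity
  have hb : 0 < c⁻¹ := by positivity
  have e : {r : Ioi (0 : ℝ) | 1 / 2 ≤ (r : ℝ) * c ∧ (r : ℝ) * c < 1} =
      Iio (⟨c⁻¹, hb⟩ : Ioi (0 : ℝ)) \ Iio (⟨1 / 2 * c⁻¹, ha⟩ : Ioi (0 : ℝ)) := by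
    ext r
    have h1 : ((r : ℝ) * c < 1) ↔ (r : ℝ) < c⁻¹ := by rw [← one_div, lt_div_iff₀ hc]
    have h2 : (1 / 2 ≤ (r : ℝ) * c) ↔ ¬ ((r : ℝ) < 1 / 2 * c⁻¹) := by
      rw [← div_eq_mul_inv, not_lt, div_le_iff₀ hc]
    show (1 / 2 ≤ (r : ℝ) * c ∧ (r : ℝ) * c < 1) ↔ ((r : ℝ) < c⁻¹ ∧ ¬ ((r : ℝ) < 1 / 2 * c⁻¹))
    rw [h1, h2, and_comm]
  have hsub : Iio (⟨1 / 2 * c⁻¹, ha⟩ : Ioi (0 : ℝ)) ⊆ Iio (⟨c⁻¹, hb⟩ : Ioi (0 : ℝ)) := by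
    apply Iio_subset_Iio
    rw [← Subtype.coe_le_coe]
    show 1 / 2 * c⁻¹ ≤ c⁻¹
    linarith
  rw [e, measure_sdiff hsub measurableSet_Iio.nullMeasurableSet
    (by rw [Measure.volumeIoiPow_apply_Iio]; exact ENNReal.ofReal_ne_top),
    Measure.volumeIoiPow_apply_Iio, Measure.volumeIoiPow_apply_Iio,
    ← ENNReal.ofReal_sub _ (by positivity), kap, ← ENNReal.ofReal_mul]
  · congr 1
    show c⁻¹ ^ (m + 1) / ((m : ℝ) + 1) - (1 / 2 * c⁻¹) ^ (m + 1) / ((m : ℝ) + 1) = _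
    rw [mul_pow]
    ring
  · have : (1 / 2 : ℝ) ^ (m + 1) ≤ 1 := pow_le_one₀ (by norm_num) (by norm_num)
    apply div_nonneg
    · linarith
    · positivity

theorem GaugeLike.polar (hf : GaugeLike f) {F : Euc (m + 1) → ℝ≥0∞} (hF : Measurable F)
    (hF0 : ∀ (t : ℝ) x, 0 < t → F (t • x) = F x) :
    ∫⁻ x in shl f, F x = kap m * ∫⁻ θ : sphere (0 : Euc (m + 1)) 1,
      F θ * ENNReal.ofReal ((f θ)⁻¹ ^ (m + 1)) ∂((volume : Measure (Euc (m + 1))).toSphere) := by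
  set G := (shl f).indicator F with hG
  have hGm : Measurable G := hF.indicator hf.measurableSet_shl
  have hmp := Measure.measurePreserving_homeomorphUnitSphereProd (volume : Measure (Euc (m + 1)))
  have e1 : Module.finrank ℝ (Euc (m + 1)) - 1 = m := by simp
  rw [e1] at hmp
  have e2 : ∫⁻ x in shl f, F x = ∫⁻ x, G x := (lintegral_indicator hf.measurableSet_shl F).symm
  have e3 : ∫⁻ x, G x = ∫⁻ x in ({0}ᶜ : Set (Euc (m + 1))), G x := by
    rw [restrict_compl_singleton]
  have e4 : ∫⁻ x in ({0}ᶜ : Set (Euc (m + 1))), G x =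
      ∫⁻ x : ({0}ᶜ : Set (Euc (m + 1))), G x ∂(Measure.comap Subtype.val volume) :=
    (lintegral_subtype_comap (measurableSet_singleton _).compl G).symm
  have e5 : ∫⁻ x : ({0}ᶜ : Set (Euc (m + 1))), G x ∂(Measure.comap Subtype.val volume) =
      ∫⁻ y : sphere (0 : Euc (m + 1)) 1 × Ioi (0 : ℝ), G ((y.2 : ℝ) • (y.1 : Euc (m + 1)))
        ∂((volume : Measure (Euc (m + 1))).toSphere.prod (Measure.volumeIoiPow m)) := by
    rw [← hmp.lintegral_comp_emb (Homeomorph.measurableEmbedding _)]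
    refine lintegral_congr fun x => ?_
    rw [← homeomorphUnitSphereProd_symm_apply_coe, Homeomorph.symm_apply_apply]
  rw [e2, e3, e4, e5, lintegral_prod _ (by
    apply Measurable.aemeasurable
    apply hGm.comp
    fun_prop), ← lintegral_const_mul']
  · refine lintegral_congr fun θ => ?_
    have hθ : (θ : Euc (m + 1)) ≠ 0 := by
      intro h
      have := θ.2
      rw [mem_sphere_zero_iff_norm, h, norm_zero] at this
      exact zero_ne_one this
    have hc := hf.pos hθ
    have e6 : ∀ r : Ioi (0 : ℝ), G ((r : ℝ) • (θ : Euc (m + 1))) =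
        {r : Ioi (0 : ℝ) | 1 / 2 ≤ (r : ℝ) * f θ ∧ (r : ℝ) * f θ < 1}.indicator
          (fun _ => F θ) r := by
      intro r
      have hr : (0 : ℝ) < r := r.2
      simp only [hG, indicator, shl, mem_ofPred_eq, hf.smul _ _ hr.le, hF0 _ _ hr]
    simp_rw [e6]
    rw [lintegral_indicator_const, volIoi_shl hc]
    · ring
    · apply MeasurableSet.inter
      · exact measurableSet_le measurable_const (measurable_subtype_coe.mul_const _)
      · exact measurableSet_lt (measurable_subtype_coe.mul_const _) measurable_const
  · exact ENNReal.ofReal_ne_top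

/-- Change of shells. -/
theorem GaugeLike.shl_change (hf : GaugeLike f) {F : Euc (m + 1) → ℝ≥0∞} (hF : Measurable F)
    (hF0 : ∀ (t : ℝ) x, 0 < t → F (t • x) = F x) :
    ∫⁻ x in shl f, F x = ∫⁻ x in shl (fun x : Euc (m + 1) => ‖x‖),
      F x * ENNReal.ofReal ((f x / ‖x‖)⁻¹ ^ (m + 1)) := by
  rw [hf.polar hF hF0, norm_gl.polar]
  · congr 1
    refine lintegral_congr fun θ => ?_
    have : ‖(θ : Euc (m + 1))‖ = 1 := mem_sphere_zero_iff_norm.1 θ.2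
    rw [this]
    simp
  · have := hf.cont.measurable
    fun_prop
  · intro t x ht
    rw [hF0 t x ht, hf.smul _ _ ht.le, norm_smul, Real.norm_of_nonneg ht.le,
      mul_div_mul_left _ _ ht.ne']

end polar

section curvature
variable {m : ℕ} {K : Set (Euc (m + 1))}

theorem natCast_sub (m : ℕ) : (((m + 1 : ℕ) : ℝ) - 1) = (m : ℝ) := by push_cast; ring

theorem bdry_eq (hK : IsConvexBody K) (h0 : (0 : Euc (m + 1)) ∈ interior K) :
    bdryMeasure (m + 1) K =
      (Measure.hausdorffMeasure (m : ℝ)).restrict {x | gauge K x = 1} := by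
  rw [bdryMeasure, frontier_eq hK h0, natCast_sub]

theorem isFinite_bdry (hK : IsConvexBody K) (h0 : (0 : Euc (m + 1)) ∈ interior K) :
    IsFiniteMeasure (bdryMeasure (m + 1) K) := by
  rw [bdry_eq hK h0]
  exact ⟨by rw [Measure.restrict_apply_univ]; exact (gauge_gl hK h0).haus_finite⟩

theorem coneM_bdry (hK : IsConvexBody K) (h0 : (0 : Euc (m + 1)) ∈ interior K) :
    coneM (gauge K) = (bdryMeasure (m + 1) K).withDensity (fun x => cm m * HH (gauge K) x) := by
  rw [(gauge_gl hK h0).coneM_eq, bdry_eq hK h0]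
  exact (withDensity_smul _ (measurable_HH _)).symm

theorem bdry_diff (hK : IsConvexBody K) (h0 : (0 : Euc (m + 1)) ∈ interior K) :
    ∀ᵐ x ∂(bdryMeasure (m + 1) K), gauge K x = 1 ∧ DifferentiableAt ℝ (gauge K) x := by
  rw [bdry_eq hK h0]
  have h1 : ∀ᵐ x ∂((Measure.hausdorffMeasure (m : ℝ)).restrict {x : Euc (m + 1) | gauge K x = 1}),
      gauge K x = 1 := ae_restrict_mem (gauge_gl hK h0).isCompact_lvl.measurableSet
  have h2 : ∀ᵐ x ∂((Measure.hausdorffMeasure (m : ℝ)).restrict {x : Euc (m + 1) | gauge K x = 1}),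
      DifferentiableAt ℝ (gauge K) x := by
    have hm : MeasurableSet {x : Euc (m + 1) | ¬ DifferentiableAt ℝ (gauge K) x} :=
      (measurableSet_of_differentiableAt ℝ _).compl
    rw [ae_iff, Measure.restrict_apply hm, inter_comm]
    exact (gauge_gl hK h0).haus_nondiff
  filter_upwards [h1, h2] with x a b using ⟨a, b⟩

theorem coneM_norm : coneM (fun x : Euc (m + 1) => ‖x‖) =
    cm m • (Measure.hausdorffMeasure (m : ℝ)).restrict (sphere (0 : Euc (m + 1)) 1) := by
  have hs : {x : Euc (m + 1) | ‖x‖ = 1} = sphere (0 : Euc (m + 1)) 1 := by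
    ext x
    rw [mem_sphere_zero_iff_norm]
    rfl
  rw [norm_gl.coneM_eq, hs]
  congr 1
  conv_rhs => rw [← withDensity_one (μ := (Measure.hausdorffMeasure (m : ℝ)).restrict (sphere (0 : Euc (m + 1)) 1))]
  apply withDensity_congr_ae
  filter_upwards [ae_restrict_mem isClosed_sphere.measurableSet] with x hx
  have hx0 : x ≠ 0 := by
    rintro rfl
    simp at hx
  have hd : DifferentiableAt ℝ (fun x : Euc (m + 1) => ‖x‖) x := differentiableAt_id.norm ℝ hx0
  have hn : ‖fderiv ℝ (fun x : Euc (m + 1) => ‖x‖) x‖ = 1 := norm_fderiv_norm hd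
  rw [HH, if_neg (norm_pos_iff.1 (by rw [hn]; exact one_pos)), hn]
  simp

theorem isFinite_sphere :
    IsFiniteMeasure ((Measure.hausdorffMeasure (m : ℝ)).restrict (sphere (0 : Euc (m + 1)) 1)) := by
  have hs : {x : Euc (m + 1) | ‖x‖ = 1} = sphere (0 : Euc (m + 1)) 1 := by
    ext x
    rw [mem_sphere_zero_iff_norm]
    rfl
  exact ⟨by rw [Measure.restrict_apply_univ, ← hs]; exact norm_gl.haus_finite⟩

theorem isFinite_curv0 : IsFiniteMeasure (curv0 (m + 1) K) := by
  rw [curv0, natCast_sub]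
  have := isFinite_sphere (m := m)
  infer_instance

theorem gradient_smul' {n : ℕ} {h : Euc n → ℝ} (hh : GaugeLike h) {t : ℝ} (ht : 0 < t) (x : Euc n) :
    gradient h (t • x) = gradient h x := by
  rw [gradient, gradient, hh.fderiv_smul ht]

theorem curv0_eq (hK : IsConvexBody K) (h0 : (0 : Euc (m + 1)) ∈ interior K) :
    cm m • curv0 (m + 1) K = Measure.map (gradient (suppFn K))
      (volume.restrict (shl (fun x : Euc (m + 1) => ‖x‖))) := by
  have hh := supp_gl hK h0
  have e1 : curv0 (m + 1) K = Measure.map (gradient (suppFn K))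
      ((Measure.hausdorffMeasure (m : ℝ)).restrict (sphere (0 : Euc (m + 1)) 1)) := by
    rw [curv0, natCast_sub]
    apply Measure.map_congr
    have h1 : ∀ᵐ x ∂((Measure.hausdorffMeasure (m : ℝ)).restrict (sphere (0 : Euc (m + 1)) 1)),
        DifferentiableAt ℝ (suppFn K) x := by
      rw [ae_iff]
      have := norm_gl.coneM_nondiff hh
      rw [coneM_norm, Measure.smul_apply, smul_eq_mul, mul_eq_zero] at this
      exact this.resolve_left (cm_ne_zero m)
    filter_upwards [h1, ae_restrict_mem isClosed_sphere.measurableSet] with x hx hxs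
    have hx0 : x ≠ 0 := by
      rintro rfl
      simp at hxs
    exact gaussMapInv_eq hK h0 hx0 hx
  rw [e1, ← Measure.map_smul, ← coneM_norm, coneM,
    Measure.map_map (measurable_gradient _) norm_gl.measurable_rad]
  apply Measure.map_congr
  filter_upwards [ae_restrict_mem norm_gl.measurableSet_shl] with x hx
  have : 0 < ‖x‖ := lt_of_lt_of_le (by norm_num) hx.1
  exact gradient_smul' hh (by positivity) x

/-- The dual cone measure of `K`. -/
def WW {n : ℕ} (K : Set (Euc n)) : Measure (Euc n) :=
  Measure.map (gradient (suppFn K)) (volume.restrict (shl (suppFn K)))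

theorem isFinite_WW (hK : IsConvexBody K) (h0 : (0 : Euc (m + 1)) ∈ interior K) :
    IsFiniteMeasure (WW K) := by
  have : IsFiniteMeasure ((volume : Measure (Euc (m + 1))).restrict (shl (suppFn K))) :=
    ⟨by rw [Measure.restrict_apply_univ]; exact (supp_gl hK h0).volume_shl_lt_top⟩
  rw [WW]
  infer_instance

theorem WW_restrict (hK : IsConvexBody K) (h0 : (0 : Euc (m + 1)) ∈ interior K) :
    (WW K).restrict {x | DifferentiableAt ℝ (gauge K) x} =
      ((cm m • curv0 (m + 1) K).restrict {x | DifferentiableAt ℝ (gauge K) x}).withDensity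
        (fun x => (HH (gauge K) x)⁻¹ ^ (m + 1)) := by
  have hh := supp_gl hK h0
  set D := {x | DifferentiableAt ℝ (gauge K) x} with hD
  have hDm : MeasurableSet D := measurableSet_of_differentiableAt ℝ _
  set k : Euc (m + 1) → ℝ≥0∞ := fun x => (HH (gauge K) x)⁻¹ ^ (m + 1) with hk
  have hkm : Measurable k := (measurable_HH _).inv.pow_const _
  have hgm := measurable_gradient (suppFn K)
  ext A hA
  have hAD := hA.inter hDm
  set F : Euc (m + 1) → ℝ≥0∞ := fun x => (A ∩ D).indicator (fun _ => (1 : ℝ≥0∞)) (gradient (suppFn K) x)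
    with hF
  have hFm : Measurable F := (measurable_const.indicator hAD).comp hgm
  have l1 : (WW K).restrict D A = ∫⁻ x in shl (suppFn K), F x := by
    rw [Measure.restrict_apply hA, WW, ← lintegral_indicator_one hAD,
      lintegral_map (measurable_one.indicator hAD) hgm]
    rfl
  rw [l1, hh.shl_change hFm (fun t x ht => by rw [hF]; simp only [gradient_smul' hh ht]),
    curv0_eq hK h0, withDensity_apply _ hA, Measure.restrict_restrict hA,
    ← lintegral_indicator hAD, lintegral_map (hkm.indicator hAD) hgm]
  apply lintegral_congr_ae
  have h1 : ∀ᵐ x ∂((volume : Measure (Euc (m + 1))).restrict (shl (fun x : Euc (m + 1) => ‖x‖))),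
      DifferentiableAt ℝ (suppFn K) x := ae_restrict_of_ae hh.ae_diff
  filter_upwards [h1, ae_restrict_mem norm_gl.measurableSet_shl] with x hx hxs
  have hxp : 0 < ‖x‖ := lt_of_lt_of_le (by norm_num) hxs.1
  have hx0 : x ≠ 0 := norm_pos_iff.1 hxp
  by_cases hm : gradient (suppFn K) x ∈ A ∩ D
  · have hs := gradient_supp_spec hK hx
    have hq : 0 < suppFn K x / ‖x‖ := div_pos (hh.pos hx0) hxp
    simp only [hF, indicator_of_mem hm, one_mul, hk]
    rw [gradient_gauge hK h0 hs.1 hx0 hs.2 hm.2, ← ENNReal.ofReal_inv_of_pos hq,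
      ENNReal.ofReal_pow (by positivity)]
  · simp only [hF, indicator_of_notMem hm, zero_mul]

theorem gaussCurv_eq (hK : IsConvexBody K) (h0 : (0 : Euc (m + 1)) ∈ interior K) :
    gaussCurv (m + 1) K =ᵐ[bdryMeasure (m + 1) K]
      fun x => HH (gauge K) x ^ (m + 2) * (WW K).rnDeriv (coneM (gauge K)) x := by
  have i1 := isFinite_bdry hK h0
  have i2 := isFinite_WW hK h0
  have i3 := isFinite_curv0 (K := K)
  have hDm : MeasurableSet {x : Euc (m + 1) | DifferentiableAt ℝ (gauge K) x} :=
    measurableSet_of_differentiableAt ℝ _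
  have i4 : IsFiniteMeasure (cm m • curv0 (m + 1) K) :=
    ⟨by
      rw [Measure.smul_apply, smul_eq_mul]
      exact ENNReal.mul_lt_top (cm_ne_top m).lt_top (measure_lt_top _ _)⟩
  have hkm : Measurable fun x => (HH (gauge K) x)⁻¹ ^ (m + 1) := (measurable_HH _).inv.pow_const _
  have j1 := Measure.haveLebesgueDecomposition_of_sigmaFinite (WW K) (bdryMeasure (m + 1) K)
  have j2 := Measure.haveLebesgueDecomposition_of_sigmaFinite (cm m • curv0 (m + 1) K)
    (bdryMeasure (m + 1) K)
  have j3 := Measure.haveLebesgueDecomposition_of_sigmaFinite (curv0 (m + 1) K)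
    (bdryMeasure (m + 1) K)
  have a1 := Measure.rnDeriv_restrict (WW K) (bdryMeasure (m + 1) K) hDm
  have a2 := Measure.rnDeriv_restrict (cm m • curv0 (m + 1) K) (bdryMeasure (m + 1) K) hDm
  have a3 := Measure.rnDeriv_smul_left_of_ne_top (curv0 (m + 1) K) (bdryMeasure (m + 1) K)
    (cm_ne_top m)
  have a4 := Measure.rnDeriv_withDensity_left
    (μ := (cm m • curv0 (m + 1) K).restrict {x : Euc (m + 1) | DifferentiableAt ℝ (gauge K) x})
    (ν := bdryMeasure (m + 1) K) hkm.aemeasurable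
    (Eventually.of_forall fun x => ENNReal.pow_ne_top (ENNReal.inv_ne_top.2 (HH_pos _ x).ne'))
  rw [← WW_restrict hK h0] at a4
  have a5 := Measure.rnDeriv_withDensity_right (WW K) (bdryMeasure (m + 1) K)
    (f := fun x => cm m * HH (gauge K) x) ((measurable_HH _).const_mul _).aemeasurable
    (Eventually.of_forall fun x => mul_ne_zero (cm_ne_zero m) (HH_pos _ x).ne')
    (Eventually.of_forall fun x => ENNReal.mul_ne_top (cm_ne_top m) (HH_lt_top _ x).ne)
  rw [← coneM_bdry hK h0] at a5
  filter_upwards [a1, a2, a3, a4, a5, bdry_diff hK h0] with x b1 b2 b3 b4 b5 b6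
  have hx : x ∈ {x : Euc (m + 1) | DifferentiableAt ℝ (gauge K) x} := b6.2
  rw [indicator_of_mem hx] at b1 b2
  rw [b1, b2, b3] at b4
  rw [b5, b4, Pi.smul_apply, smul_eq_mul]
  have c0 := cm_ne_zero m
  have c1 := cm_ne_top m
  have p0 := (HH_pos (gauge K) x).ne'
  have p1 := (HH_lt_top (gauge K) x).ne
  rw [ENNReal.mul_inv (Or.inl c0) (Or.inl c1), gaussCurv]
  calc _ = ((HH (gauge K) x) * (HH (gauge K) x)⁻¹) ^ (m + 2) * ((cm m)⁻¹ * cm m) *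
        Measure.rnDeriv (curv0 (m + 1) K) (bdryMeasure (m + 1) K) x := by
        rw [ENNReal.mul_inv_cancel p0 p1, ENNReal.inv_mul_cancel c0 c1, one_pow, one_mul, one_mul]
    _ = _ := by ring

/-- Normal form for the affine surface area. -/
def nf (m : ℕ) (p : ℝ) (V W : Measure (Euc (m + 1))) : ℝ≥0∞ :=
  sInf {v : ℝ≥0∞ | ∃ f : Euc (m + 1) → ℝ≥0∞, Measurable f ∧ (∀ x, 0 < f x ∧ f x < ⊤) ∧
    (∫⁻ x, f x ^ p ∂V) < ⊤ ∧
    v = ((cm m)⁻¹ * ∫⁻ x, f x ^ (-((m + 1 : ℕ) : ℝ)) * W.rnDeriv V x ∂V) ^ (p / ((m + 1 : ℕ) + p)) *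
        ((cm m)⁻¹ * ∫⁻ x, f x ^ p ∂V) ^ (((m + 1 : ℕ) : ℝ) / ((m + 1 : ℕ) + p))}

theorem lint_cone (hK : IsConvexBody K) (h0 : (0 : Euc (m + 1)) ∈ interior K)
    {F : Euc (m + 1) → ℝ≥0∞} (hF : Measurable F) :
    (cm m)⁻¹ * ∫⁻ x, F x ∂(coneM (gauge K)) =
      ∫⁻ x, HH (gauge K) x * F x ∂(bdryMeasure (m + 1) K) := by
  rw [coneM_bdry hK h0, lintegral_withDensity_eq_lintegral_mul _ ((measurable_HH _).const_mul _) hF]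
  simp only [Pi.mul_apply, mul_assoc]
  have hm : Measurable fun x => HH (gauge K) x * F x := (measurable_HH _).mul hF
  rw [lintegral_const_mul _ hm, ← mul_assoc,
    ENNReal.inv_mul_cancel (cm_ne_zero m) (cm_ne_top m), one_mul]

theorem int2 (hK : IsConvexBody K) (h0 : (0 : Euc (m + 1)) ∈ interior K) {p : ℝ}
    {f g : Euc (m + 1) → ℝ≥0∞} (hf : Measurable f)
    (hfg : ∀ x, g x = f x * HH (gauge K) x) (hp : 0 < p) :
    ∫⁻ x, g x ^ p * ENNReal.ofReal (suppFn K (gaussMap K x)) ^ (1 - p)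
      ∂(bdryMeasure (m + 1) K) = (cm m)⁻¹ * ∫⁻ x, f x ^ p ∂(coneM (gauge K)) := by
  rw [lint_cone hK h0 (hf.pow_const p)]
  apply lintegral_congr_ae
  filter_upwards [bdry_diff hK h0] with x hx
  have p0 := (HH_pos (gauge K) x).ne'
  have p1 := (HH_lt_top (gauge K) x).ne
  rw [supp_gaussMap hK h0 hx.1 hx.2, hfg, ENNReal.mul_rpow_of_nonneg _ _ hp.le, mul_assoc,
    ← ENNReal.rpow_add _ _ p0 p1]
  norm_num
  rw [mul_comm]

theorem int1 (hK : IsConvexBody K) (h0 : (0 : Euc (m + 1)) ∈ interior K)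
    {f g : Euc (m + 1) → ℝ≥0∞} (hf : Measurable f) (hf0 : ∀ x, 0 < f x ∧ f x < ⊤)
    (hfg : ∀ x, g x = f x * HH (gauge K) x) :
    ∫⁻ x, g x ^ (-((m + 1 : ℕ) : ℝ)) * gaussCurv (m + 1) K x ∂(bdryMeasure (m + 1) K) =
      (cm m)⁻¹ * ∫⁻ x, f x ^ (-((m + 1 : ℕ) : ℝ)) * (WW K).rnDeriv (coneM (gauge K)) x
        ∂(coneM (gauge K)) := by
  have hm : Measurable fun x => f x ^ (-((m + 1 : ℕ) : ℝ)) * (WW K).rnDeriv (coneM (gauge K)) x :=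
    (hf.pow_const _).mul (Measure.measurable_rnDeriv _ _)
  rw [lint_cone hK h0 hm]
  apply lintegral_congr_ae
  filter_upwards [gaussCurv_eq hK h0] with x hx
  have p0 := (HH_pos (gauge K) x).ne'
  have p1 := (HH_lt_top (gauge K) x).ne
  rw [hx, hfg, ENNReal.mul_rpow_of_ne_zero (hf0 x).1.ne' p0]
  have e : HH (gauge K) x ^ (-((m + 1 : ℕ) : ℝ)) * HH (gauge K) x ^ (m + 2) = HH (gauge K) x := by
    rw [← ENNReal.rpow_natCast _ (m + 2), ← ENNReal.rpow_add _ _ p0 p1]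
    have : (-((m + 1 : ℕ) : ℝ)) + ((m + 2 : ℕ) : ℝ) = 1 := by push_cast; ring
    rw [this, ENNReal.rpow_one]
  calc _ = f x ^ (-((m + 1 : ℕ) : ℝ)) * (HH (gauge K) x ^ (-((m + 1 : ℕ) : ℝ)) *
        HH (gauge K) x ^ (m + 2)) * (WW K).rnDeriv (coneM (gauge K)) x := by ring
    _ = _ := by rw [e]; ring

theorem lpASAm_eq (hK : IsConvexBody K) (h0 : (0 : Euc (m + 1)) ∈ interior K) {p : ℝ} (hp : 0 < p) :
    lpASAm (m + 1) p K = nf m p (coneM (gauge K)) (WW K) := by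
  have hfin : ∀ I : ℝ≥0∞, (cm m)⁻¹ * I < ⊤ ↔ I < ⊤ := by
    intro I
    constructor
    · intro h
      by_contra h'
      rw [not_lt, top_le_iff] at h'
      rw [h', ENNReal.mul_top (ENNReal.inv_ne_zero.2 (cm_ne_top m))] at h
      exact lt_irrefl _ h
    · exact fun h => ENNReal.mul_lt_top (ENNReal.inv_lt_top.2 (pos_iff_ne_zero.2 (cm_ne_zero m))) h
  rw [lpASAm, nf]
  congr 1
  ext v
  constructor
  · rintro ⟨g, hg, hg0, hi, hv⟩
    have hfm : Measurable fun x => g x * (HH (gauge K) x)⁻¹ := hg.mul (measurable_HH _).inv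
    have hfg : ∀ x, g x = (g x * (HH (gauge K) x)⁻¹) * HH (gauge K) x := by
      intro x
      rw [mul_assoc, ENNReal.inv_mul_cancel (HH_pos _ x).ne' (HH_lt_top _ x).ne, mul_one]
    have hf0 : ∀ x, 0 < g x * (HH (gauge K) x)⁻¹ ∧ g x * (HH (gauge K) x)⁻¹ < ⊤ := fun x =>
      ⟨ENNReal.mul_pos (hg0 x).1.ne' (ENNReal.inv_ne_zero.2 (HH_lt_top _ x).ne),
        ENNReal.mul_lt_top (hg0 x).2 (ENNReal.inv_lt_top.2 (HH_pos _ x))⟩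
    rw [int2 hK h0 hfm hfg hp] at hi hv
    rw [int1 hK h0 hfm hf0 hfg] at hv
    exact ⟨_, hfm, hf0, (hfin _).1 hi, hv⟩
  · rintro ⟨f, hf, hf0, hi, hv⟩
    have hg0 : ∀ x, 0 < f x * HH (gauge K) x ∧ f x * HH (gauge K) x < ⊤ := fun x =>
      ⟨ENNReal.mul_pos (hf0 x).1.ne' (HH_pos _ x).ne',
        ENNReal.mul_lt_top (hf0 x).2 (HH_lt_top _ x)⟩
    refine ⟨fun x => f x * HH (gauge K) x, hf.mul (measurable_HH _), hg0, ?_, ?_⟩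
    · rw [int2 hK h0 hf (fun _ => rfl) hp]
      exact (hfin _).2 hi
    · rw [int2 hK h0 hf (fun _ => rfl) hp, int1 hK h0 hf hf0 (fun _ => rfl)]
      exact hv

end curvature

section invariance
variable {m : ℕ} {K : Set (Euc (m + 1))}

theorem mp_of_det {n : ℕ} (ψ : Euc n →ₗ[ℝ] Euc n) (hdet : LinearMap.det ψ = 1 ∨ LinearMap.det ψ = -1) :
    MeasurePreserving ψ (volume : Measure (Euc n)) volume := by
  have h0 : LinearMap.det ψ ≠ 0 := by rcases hdet with h | h <;> rw [h] <;> norm_num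
  have h1 : |(LinearMap.det ψ)⁻¹| = 1 := by rcases hdet with h | h <;> rw [h] <;> norm_num
  refine ⟨ψ.continuous_of_finiteDimensional.measurable, ?_⟩
  rw [Measure.map_linearMap_addHaar_eq_smul_addHaar _ h0, h1]
  simp

open scoped Pointwise in
theorem gauge_image_equiv {n : ℕ} (φ : Euc n ≃ₗ[ℝ] Euc n) (K : Set (Euc n)) (x : Euc n) :
    gauge (φ '' K) (φ x) = gauge K x := by
  have : ∀ r : ℝ, φ x ∈ r • (φ '' K) ↔ x ∈ r • K := by
    intro r
    constructor
    · rintro ⟨y, ⟨z, hz, rfl⟩, h⟩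
      refine ⟨z, hz, φ.injective ?_⟩
      rw [← h]
      exact map_smul φ r z
    · rintro ⟨z, hz, rfl⟩
      exact ⟨φ z, mem_image_of_mem _ hz, (map_smul φ r z).symm⟩
  simp only [gauge_def, this]

theorem body_image {n : ℕ} (φ : Euc n ≃ₗ[ℝ] Euc n) {K : Set (Euc n)} (hK : IsConvexBody K)
    (h0 : (0 : Euc n) ∈ interior K) :
    IsConvexBody (φ '' K) ∧ (0 : Euc n) ∈ interior (φ '' K) := by
  have e : (φ '' interior K) = interior (φ '' K) :=
    φ.toContinuousLinearEquiv.toHomeomorph.image_interior K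
  have h0' : (0 : Euc n) ∈ interior (φ '' K) := by
    rw [← e]
    exact ⟨0, h0, map_zero φ⟩
  refine ⟨⟨hK.1.image φ.toContinuousLinearEquiv.continuous, ?_, ⟨0, h0'⟩⟩, h0'⟩
  exact hK.2.1.linear_image (φ : Euc n →ₗ[ℝ] Euc n)

theorem coneM_image (φ : Euc (m + 1) ≃ₗ[ℝ] Euc (m + 1))
    (hdet : LinearMap.det (φ : Euc (m + 1) →ₗ[ℝ] Euc (m + 1)) = 1 ∨
      LinearMap.det (φ : Euc (m + 1) →ₗ[ℝ] Euc (m + 1)) = -1)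
    (hK : IsConvexBody K) (h0 : (0 : Euc (m + 1)) ∈ interior K) :
    coneM (gauge (φ '' K)) = Measure.map φ (coneM (gauge K)) := by
  obtain ⟨hK', h0'⟩ := body_image φ hK h0
  have hg := gauge_gl hK h0
  have hg' := gauge_gl hK' h0'
  have hmp : MeasurePreserving φ (volume : Measure (Euc (m + 1))) volume := mp_of_det _ hdet
  have hpre : φ ⁻¹' (shl (gauge (φ '' K))) = shl (gauge K) := by
    ext x
    simp only [shl, mem_preimage, mem_ofPred_eq, gauge_image_equiv]
  have h1 := (hmp.restrict_preimage hg'.measurableSet_shl).map_eq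
  rw [hpre] at h1
  rw [coneM, ← h1, Measure.map_map hg'.measurable_rad hmp.measurable, coneM,
    Measure.map_map hmp.measurable hg.measurable_rad]
  congr 1
  ext1 x
  simp only [Function.comp, rad, gauge_image_equiv, map_smul]

theorem WW_image (φ : Euc (m + 1) ≃ₗ[ℝ] Euc (m + 1))
    (hdet : LinearMap.det (φ : Euc (m + 1) →ₗ[ℝ] Euc (m + 1)) = 1 ∨
      LinearMap.det (φ : Euc (m + 1) →ₗ[ℝ] Euc (m + 1)) = -1)
    (hK : IsConvexBody K) (h0 : (0 : Euc (m + 1)) ∈ interior K) :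
    WW (φ '' K) = Measure.map φ (WW K) := by
  obtain ⟨hK', h0'⟩ := body_image φ hK h0
  have hh := supp_gl hK h0
  have hh' := supp_gl hK' h0'
  set ψ := LinearMap.adjoint (φ : Euc (m + 1) →ₗ[ℝ] Euc (m + 1)) with hψ
  have hψi : ∀ y u, ⟪φ y, u⟫ = ⟪y, ψ u⟫ := fun y u => (LinearMap.adjoint_inner_right _ y u).symm
  have hψd : LinearMap.det ψ = 1 ∨ LinearMap.det ψ = -1 := by
    have hdd : LinearMap.det ψ = LinearMap.det (φ : Euc (m + 1) →ₗ[ℝ] Euc (m + 1)) := by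
      rw [← LinearMap.det_toMatrix (EuclideanSpace.basisFun (Fin (m + 1)) ℝ).toBasis,
        ← LinearMap.det_toMatrix (EuclideanSpace.basisFun (Fin (m + 1)) ℝ).toBasis (φ : Euc (m + 1) →ₗ[ℝ] Euc (m + 1)), hψ,
        LinearMap.toMatrix_adjoint, Matrix.det_conjTranspose, star_trivial]
    rw [hdd]
    exact hdet
  have hφ : Measurable φ := φ.toContinuousLinearEquiv.continuous.measurable
  have hmp : MeasurePreserving ψ (volume : Measure (Euc (m + 1))) volume := mp_of_det _ hψd
  have hsupp : ∀ u, suppFn (φ '' K) u = suppFn K (ψ u) := by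
    intro u
    simp only [suppFn, image_image, hψi]
  have hpre : ψ ⁻¹' (shl (suppFn K)) = shl (suppFn (φ '' K)) := by
    ext x
    simp only [shl, mem_preimage, mem_ofPred_eq, hsupp]
  have h1 := (hmp.restrict_preimage hh.measurableSet_shl).map_eq
  rw [hpre] at h1
  rw [WW, WW, ← h1, Measure.map_map (measurable_gradient _) hmp.measurable,
    Measure.map_map hφ ((measurable_gradient _).comp hmp.measurable)]
  apply Measure.map_congr
  have d1 : ∀ᵐ u ∂(volume : Measure (Euc (m + 1))), DifferentiableAt ℝ (suppFn K) (ψ u) :=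
    hmp.quasiMeasurePreserving.ae hh.ae_diff
  filter_upwards [ae_restrict_of_ae hh'.ae_diff, ae_restrict_of_ae d1] with u hu1 hu2
  obtain ⟨s1, s2⟩ := gradient_supp_spec hK hu2
  exact (eq_gradient_supp hK' (mem_image_of_mem φ s1) (by rw [hψi, s2, hsupp]) hu1).symm

theorem nf_le (φ : Euc (m + 1) ≃ₗ[ℝ] Euc (m + 1)) (p : ℝ) (V W : Measure (Euc (m + 1)))
    [IsFiniteMeasure V] [IsFiniteMeasure W] :
    nf m p (Measure.map φ V) (Measure.map φ W) = nf m p V W := by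
  set e : Euc (m + 1) ≃ᵐ Euc (m + 1) := φ.toContinuousLinearEquiv.toHomeomorph.toMeasurableEquiv
  have he : ∀ x, φ x = e x := fun x => rfl
  have hmap : ∀ F : Euc (m + 1) → ℝ≥0∞, ∫⁻ x, F x ∂(Measure.map φ V) = ∫⁻ x, F (φ x) ∂V :=
    fun F => lintegral_map_equiv F e
  have hrn : (fun x => (Measure.map φ W).rnDeriv (Measure.map φ V) (φ x)) =ᵐ[V] W.rnDeriv V :=
    e.measurableEmbedding.rnDeriv_map W V
  have key : ∀ f : Euc (m + 1) → ℝ≥0∞,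
      ∫⁻ x, f x ^ (-((m + 1 : ℕ) : ℝ)) * (Measure.map φ W).rnDeriv (Measure.map φ V) x
        ∂(Measure.map φ V) =
      ∫⁻ x, f (φ x) ^ (-((m + 1 : ℕ) : ℝ)) * W.rnDeriv V x ∂V := by
    intro f
    rw [hmap]
    apply lintegral_congr_ae
    filter_upwards [hrn] with x hx
    rw [hx]
  rw [nf, nf]
  congr 1
  ext v
  constructor
  · rintro ⟨f, hf, hf0, hi, hv⟩
    rw [key, hmap] at hv
    rw [hmap] at hi
    exact ⟨fun x => f (φ x), hf.comp e.measurable, fun x => hf0 _, hi, hv⟩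
  · rintro ⟨f, hf, hf0, hi, hv⟩
    refine ⟨fun x => f (φ.symm x), hf.comp e.symm.measurable, fun x => hf0 _, ?_, ?_⟩
    · rw [hmap]
      simpa only [LinearEquiv.symm_apply_apply] using hi
    · rw [key, hmap]
      simpa only [LinearEquiv.symm_apply_apply] using hv

end invariance

theorem statement14 (n : ℕ) (hn : 0 < n) (p : ℝ) (hp : 0 < p) (K : Set (Euc n))
    (hK : IsConvexBody K) (h0 : (0 : Euc n) ∈ interior K)
    (φ : Euc n ≃ₗ[ℝ] Euc n)
    (hdet : LinearMap.det (φ : Euc n →ₗ[ℝ] Euc n) = 1 ∨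
            LinearMap.det (φ : Euc n →ₗ[ℝ] Euc n) = -1) :
    lpASAm n p (⇑φ '' K) = lpASAm n p K := by
  obtain ⟨m, rfl⟩ : ∃ m, n = m + 1 := ⟨n - 1, by omega⟩
  obtain ⟨hK', h0'⟩ := body_image φ hK h0
  have i1 := (gauge_gl hK h0).isFinite_coneM
  have i2 := isFinite_WW hK h0
  rw [lpASAm_eq hK' h0' hp, lpASAm_eq hK h0 hp, coneM_image φ hdet hK h0,
    WW_image φ hdet hK h0, nf_le]

end
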